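/- arXiv:1912.02840 — 2 statements merged into one kernel-verified Lean document; each statement's English description precedes it below -/
import Mathlib

section
/- If Q is not linearly oriented (not all arrows point in the same direction), then the set {H(α), C(α) : α an arrow of Q} equals the set of interval representations supported on the vertex sets of the maximal increasing paths and the maximal decreasing paths of Q. -/
open scoped Classical

noncomputable section

namespace CambrianA

/-! ### Combinatorics of a type `A_{n+2}` quiver.

Vertices are `1, …, n+2`.  For `1 ≤ i ≤ n+1`, `ε i = true` means that the arrow between
`i` and `i+1` is oriented `i → i+1` (`i` is *upper-barred*), and `ε i = false` means it is
oriented `(i+1) → i` (`i` is *lower-barred*). -/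

/-- `MaxIncr n ε i j` : the path `i → i+1 → ⋯ → j` is a maximal increasing path of `Q`. -/
def MaxIncr (n : ℕ) (ε : ℕ → Bool) (i j : ℕ) : Prop :=
  1 ≤ i ∧ i ≤ j ∧ j ≤ n + 2 ∧ (∀ ℓ, i ≤ ℓ → ℓ < j → ε ℓ = true) ∧
    (i = 1 ∨ ε (i - 1) = false) ∧ (j = n + 2 ∨ ε j = false)

/-- `MaxDecr n ε i j` : the path `i → i-1 → ⋯ → j` is a maximal decreasing path of `Q`. -/
def MaxDecr (n : ℕ) (ε : ℕ → Bool) (i j : ℕ) : Prop :=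
  1 ≤ j ∧ j ≤ i ∧ i ≤ n + 2 ∧ (∀ ℓ, j ≤ ℓ → ℓ < i → ε ℓ = false) ∧
    (i = n + 2 ∨ ε i = true) ∧ (j = 1 ∨ ε (j - 1) = true)

/-- Vertices of the polygon lying on the lower boundary: `0`, `n+2` and lower-barred ones. -/
def LowerVertex (n : ℕ) (ε : ℕ → Bool) (x : ℕ) : Prop :=
  x = 0 ∨ x = n + 2 ∨ (1 ≤ x ∧ x ≤ n + 1 ∧ ε x = false)

/-- Vertices of the polygon lying on the upper boundary: `0`, `n+2` and upper-barred ones. -/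
def UpperVertex (n : ℕ) (ε : ℕ → Bool) (x : ℕ) : Prop :=
  x = 0 ∨ x = n + 2 ∨ (1 ≤ x ∧ x ≤ n + 1 ∧ ε x = true)

/-- `(a,b)` is a lower boundary edge: `a < b` are consecutive lower vertices. -/
def LowerEdge (n : ℕ) (ε : ℕ → Bool) (a b : ℕ) : Prop :=
  LowerVertex n ε a ∧ LowerVertex n ε b ∧ a < b ∧
    ∀ c, LowerVertex n ε c → ¬(a < c ∧ c < b)

/-- `(a,b)` is an upper boundary edge: `a < b` are consecutive upper vertices. -/
def UpperEdge (n : ℕ) (ε : ℕ → Bool) (a b : ℕ) : Prop :=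
  UpperVertex n ε a ∧ UpperVertex n ε b ∧ a < b ∧
    ∀ c, UpperVertex n ε c → ¬(a < c ∧ c < b)

def BoundaryEdge (n : ℕ) (ε : ℕ → Bool) (a b : ℕ) : Prop :=
  LowerEdge n ε a b ∨ UpperEdge n ε a b

/-- `IsHook n ε a lo hi` : the hook of the arrow of `Q` between `a` and `a+1` is the
maximal path supported on the interval `[lo, hi]`.
If `ε a = true` (arrow `a → a+1`, source `a`), the hook is the maximal decreasing path
starting at `a`; if `ε a = false` (arrow `a+1 → a`, source `a+1`), the hook is the
maximal increasing path starting at `a+1`. -/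
def IsHook (n : ℕ) (ε : ℕ → Bool) (a lo hi : ℕ) : Prop :=
  if ε a = true then
    hi = a ∧ 1 ≤ lo ∧ lo ≤ a ∧ (∀ ℓ, lo ≤ ℓ → ℓ < a → ε ℓ = false) ∧
      (lo = 1 ∨ ε (lo - 1) = true)
  else
    lo = a + 1 ∧ a + 1 ≤ hi ∧ hi ≤ n + 2 ∧ (∀ ℓ, a + 1 ≤ ℓ → ℓ < hi → ε ℓ = true) ∧
      (hi = n + 2 ∨ ε hi = false)

/-- `IsCohook n ε a lo hi` : the cohook of the arrow of `Q` between `a` and `a+1` is the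
maximal path supported on the interval `[lo, hi]`, ending at the target of the arrow. -/
def IsCohook (n : ℕ) (ε : ℕ → Bool) (a lo hi : ℕ) : Prop :=
  if ε a = true then
    lo = a + 1 ∧ a + 1 ≤ hi ∧ hi ≤ n + 2 ∧ (∀ ℓ, a + 1 ≤ ℓ → ℓ < hi → ε ℓ = false) ∧
      (hi = n + 2 ∨ ε hi = true)
  else
    hi = a ∧ 1 ≤ lo ∧ lo ≤ a ∧ (∀ ℓ, lo ≤ ℓ → ℓ < a → ε ℓ = true) ∧
      (lo = 1 ∨ ε (lo - 1) = false)

/-- Counterclockwise neighbor `R⁻¹(ℓ)` of the vertex `ℓ` of the polygon `P(Q)`, for the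
cyclic order `0`, lower-barred vertices increasing, `n+2`, upper-barred vertices
decreasing. -/
def Rinv (n : ℕ) (ε : ℕ → Bool) (ℓ : ℕ) : ℕ :=
  if ℓ = n + 2 then sSup ({0} ∪ {x | 1 ≤ x ∧ x ≤ n + 1 ∧ ε x = true})
  else if 1 ≤ ℓ ∧ ℓ ≤ n + 1 ∧ ε ℓ = true then
    sSup ({0} ∪ {x | 1 ≤ x ∧ x < ℓ ∧ ε x = true})
  else
    sInf ({n + 2} ∪ {x | ℓ < x ∧ x ≤ n + 1 ∧ ε x = false})

/-- `γ(i′,j′)` is a pivot of `γ(i,j)`. -/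
def IsPivot (n : ℕ) (ε : ℕ → Bool) (i j i' j' : ℕ) : Prop :=
  (i' = Rinv n ε i ∧ j' = j ∧ Rinv n ε i < j) ∨
    (i' = i ∧ j' = Rinv n ε j ∧ i < Rinv n ε j)

/-! ### Geometry of the polygon `P(Q)`.

The plane is identified with `ℂ`; `p x` is the vertex of the polygon labeled `x`,
for `0 ≤ x ≤ n+2`. -/

/-- The hypotheses on the points `p 0, …, p (n+2)` realizing the polygon `P(Q)`:
strictly increasing `x`-coordinates; `p 0` and `p (n+2)` on a common horizontal line `L`;
upper-barred vertices above `L`, lower-barred vertices below `L`; convex position. -/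
def PolyPts (n : ℕ) (ε : ℕ → Bool) (p : ℕ → ℂ) : Prop :=
  (∀ a b, a < b → b ≤ n + 2 → (p a).re < (p b).re) ∧
    (p (n + 2)).im = (p 0).im ∧
    (∀ i, 1 ≤ i → i ≤ n + 1 →
      (ε i = true → (p 0).im < (p i).im) ∧ (ε i = false → (p i).im < (p 0).im)) ∧
    ∀ i, i ≤ n + 2 → p i ∉ convexHull ℝ (p '' {j | j ≤ n + 2 ∧ j ≠ i})

/-- The line segment `γ(e.1, e.2)` of the polygon. -/
def Seg (p : ℕ → ℂ) (e : ℕ × ℕ) : Set ℂ := segment ℝ (p e.1) (p e.2)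

/-- Two segments cross when they intersect in a point that is not a common endpoint. -/
def Cross (p : ℕ → ℂ) (e f : ℕ × ℕ) : Prop :=
  ∃ z, z ∈ Seg p e ∧ z ∈ Seg p f ∧
    ¬((z = p e.1 ∨ z = p e.2) ∧ (z = p f.1 ∨ z = p f.2))

/-- Slope of the segment `γ(e.1, e.2)`. -/
def slope (p : ℕ → ℂ) (e : ℕ × ℕ) : ℝ :=
  ((p e.2).im - (p e.1).im) / ((p e.2).re - (p e.1).re)

def ValidPair (n : ℕ) (e : ℕ × ℕ) : Prop := e.1 < e.2 ∧ e.2 ≤ n + 2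

/-- A triangulation of `P(Q)`: a maximal collection of pairwise noncrossing segments. -/
def IsTriangulation (n : ℕ) (p : ℕ → ℂ) (T : Finset (ℕ × ℕ)) : Prop :=
  (∀ e ∈ T, ValidPair n e) ∧ (∀ e ∈ T, ∀ f ∈ T, e ≠ f → ¬Cross p e f) ∧
    ∀ e, ValidPair n e → e ∉ T → ∃ f ∈ T, Cross p e f

/-- Cross product of two planar vectors; positive iff `(u, v)` is counterclockwise. -/
def cross2 (u v : ℂ) : ℝ := u.re * v.im - u.im * v.re

/-- Arrows of the adjacency quiver `Q(T)` of a triangulation `T`: `e → f` whenever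
`e` and `f` are sides of a common triangle of `T` and `f` follows `e` going
counterclockwise around that triangle. -/
def TriArrow (p : ℕ → ℂ) (T : Finset (ℕ × ℕ)) (e f : ℕ × ℕ) : Prop :=
  ∃ a b c : ℕ, a < b ∧ b < c ∧ (a, b) ∈ T ∧ (b, c) ∈ T ∧ (a, c) ∈ T ∧
    ((0 < cross2 (p b - p a) (p c - p a) ∧
        ((e = (a, b) ∧ f = (b, c)) ∨ (e = (b, c) ∧ f = (a, c)) ∨
          (e = (a, c) ∧ f = (a, b)))) ∨
      (cross2 (p b - p a) (p c - p a) < 0 ∧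
        ((e = (a, c) ∧ f = (b, c)) ∨ (e = (b, c) ∧ f = (a, b)) ∨
          (e = (a, b) ∧ f = (a, c)))))

/-! ### Representations of `Q` -/

/-- A finite dimensional representation of the quiver `Q` of type `A_{n+2}` over `k`.
The vector spaces are indexed by `ℕ`, and are required to vanish outside the set
`{1, …, n+2}` of vertices of `Q`.  For each `i`, `fwd i : V i → V (i+1)` is the structure
map of the arrow `i → i+1` (it is required to vanish when the arrow is oriented in the
other direction, i.e. `ε i = false`) and `bwd i : V (i+1) → V i` is the structure map of
the arrow `i+1 → i` (required to vanish when `ε i = true`). -/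
structure ARep (k : Type) [Field k] (n : ℕ) (ε : ℕ → Bool) where
  V : ℕ → Type
  [acg : ∀ x, AddCommGroup (V x)]
  [mod : ∀ x, Module k (V x)]
  [fdim : ∀ x, FiniteDimensional k (V x)]
  triv : ∀ x, x = 0 ∨ n + 2 < x → ∀ v : V x, v = 0
  fwd : ∀ i, V i →ₗ[k] V (i + 1)
  bwd : ∀ i, V (i + 1) →ₗ[k] V i
  fwd_zero : ∀ i, ε i = false → fwd i = 0
  bwd_zero : ∀ i, ε i = true → bwd i = 0

attribute [instance] ARep.acg ARep.mod ARep.fdim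

variable {k : Type} [Field k] {n : ℕ} {ε : ℕ → Bool}

/-- Morphisms of representations. -/
@[ext]
structure ARep.Hom (M N : ARep k n ε) where
  app : ∀ x, M.V x →ₗ[k] N.V x
  comm_fwd : ∀ i (v : M.V i), app (i + 1) (M.fwd i v) = N.fwd i (app i v)
  comm_bwd : ∀ i (v : M.V (i + 1)), app i (M.bwd i v) = N.bwd i (app (i + 1) v)

/-- The identity morphism. -/
def ARep.Hom.id (M : ARep k n ε) : M.Hom M :=
  ⟨fun _ => LinearMap.id, fun _ _ => rfl, fun _ _ => rfl⟩

/-- Composition of morphisms. -/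
def ARep.Hom.comp {M N P : ARep k n ε} (g : N.Hom P) (f : M.Hom N) : M.Hom P where
  app x := (g.app x).comp (f.app x)
  comm_fwd i v := by simp only [LinearMap.comp_apply, f.comm_fwd, g.comm_fwd]
  comm_bwd i v := by simp only [LinearMap.comp_apply, f.comm_bwd, g.comm_bwd]

/-- Sum of two morphisms. -/
def ARep.Hom.add {M N : ARep k n ε} (f g : M.Hom N) : M.Hom N where
  app x := f.app x + g.app x
  comm_fwd i v := by
    simp only [LinearMap.add_apply, f.comm_fwd, g.comm_fwd, map_add]
  comm_bwd i v := by
    simp only [LinearMap.add_apply, f.comm_bwd, g.comm_bwd, map_add]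

/-- Scalar multiple of a morphism. -/
def ARep.Hom.smul {M N : ARep k n ε} (c : k) (f : M.Hom N) : M.Hom N where
  app x := c • f.app x
  comm_fwd i v := by simp only [LinearMap.smul_apply, f.comm_fwd, map_smul]
  comm_bwd i v := by simp only [LinearMap.smul_apply, f.comm_bwd, map_smul]

/-- Isomorphism of representations. -/
def ARep.Iso (M N : ARep k n ε) : Prop :=
  ∃ f : M.Hom N, ∀ x, Function.Bijective (f.app x)

/-- The zero representation(s). -/
def ARep.IsZero (M : ARep k n ε) : Prop := ∀ x, ∀ v : M.V x, v = 0

/-- The support of a representation. -/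
def ARep.supp (M : ARep k n ε) : Set ℕ := {x | ∃ v : M.V x, v ≠ 0}

/-- Direct sum of two representations. -/
def ARep.dsum (M N : ARep k n ε) : ARep k n ε where
  V x := M.V x × N.V x
  acg _ := by infer_instance
  mod _ := by infer_instance
  fdim _ := by infer_instance
  triv x hx v := by
    have h1 := M.triv x hx v.1
    have h2 := N.triv x hx v.2
    exact Prod.ext h1 h2
  fwd i := (M.fwd i).prodMap (N.fwd i)
  bwd i := (M.bwd i).prodMap (N.bwd i)
  fwd_zero i h := by
    show (M.fwd i).prodMap (N.fwd i) = 0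
    rw [M.fwd_zero i h, N.fwd_zero i h]
    apply LinearMap.ext; rintro ⟨a, b⟩; simp
  bwd_zero i h := by
    show (M.bwd i).prodMap (N.bwd i) = 0
    rw [M.bwd_zero i h, N.bwd_zero i h]
    apply LinearMap.ext; rintro ⟨a, b⟩; simp

/-- One dimensional space `k` if `P` holds, `0` otherwise (as a submodule of `k`). -/
def fiber (k : Type) [Field k] (P : Prop) : Submodule k k := if P then ⊤ else ⊥

/-- The canonical map `fiber k P → fiber k Q` : "identity" if `P ∧ Q`, zero otherwise. -/
def fiberMap (k : Type) [Field k] (P Q : Prop) : fiber k P →ₗ[k] fiber k Q :=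
  if h : P ∧ Q then
    { toFun := fun v => ⟨(v : k), by rw [fiber, if_pos h.2]; exact Submodule.mem_top⟩
      map_add' := fun _ _ => rfl
      map_smul' := fun _ _ => rfl }
  else 0

/-- The zero representation. -/
def zeroRep (k : Type) [Field k] (n : ℕ) (ε : ℕ → Bool) : ARep k n ε where
  V _ := ↥(fiber k False)
  acg _ := by infer_instance
  mod _ := by infer_instance
  fdim _ := by infer_instance
  triv x _ v := by
    have hfib : fiber k False = ⊥ := if_neg (fun h : False => h.elim)
    obtain ⟨w, hw⟩ := v
    apply Subtype.ext
    have hb : w ∈ (⊥ : Submodule k k) := hfib ▸ hw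
    exact (Submodule.mem_bot k).1 hb
  fwd _ := 0
  bwd _ := 0
  fwd_zero _ _ := rfl
  bwd_zero _ _ := rfl

/-- The condition for a vertex `x` to be in the support of the interval representation
`M(i,j)`. -/
def SuppCond (n i j x : ℕ) : Prop := i ≤ x ∧ x ≤ j ∧ 1 ≤ x ∧ x ≤ n + 2

/-- The interval (string) representation `M(i,j)` of `Q`: one dimensional at each vertex
`x` with `i ≤ x ≤ j`, zero elsewhere, with identity maps on all arrows whose endpoints
both lie in `[i,j]`. -/
def intervalRep (k : Type) [Field k] (n : ℕ) (ε : ℕ → Bool) (i j : ℕ) : ARep k n ε where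
  V x := ↥(fiber k (SuppCond n i j x))
  acg _ := by infer_instance
  mod _ := by infer_instance
  fdim _ := by infer_instance
  triv x hx v := by
    have hP : ¬SuppCond n i j x := by simp only [SuppCond]; omega
    have hfib : fiber k (SuppCond n i j x) = ⊥ := if_neg hP
    obtain ⟨w, hw⟩ := v
    apply Subtype.ext
    have hb : w ∈ (⊥ : Submodule k k) := hfib ▸ hw
    exact (Submodule.mem_bot k).1 hb
  fwd ℓ :=
    if ε ℓ = true then fiberMap k (SuppCond n i j ℓ) (SuppCond n i j (ℓ + 1)) else 0
  bwd ℓ :=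
    if ε ℓ = true then 0 else fiberMap k (SuppCond n i j (ℓ + 1)) (SuppCond n i j ℓ)
  fwd_zero ℓ h := by simp [h]
  bwd_zero ℓ h := by simp [h]

/-- Direct sum of a list of representations. -/
def dsumList (k : Type) [Field k] (n : ℕ) (ε : ℕ → Bool) :
    List (ARep k n ε) → ARep k n ε
  | [] => zeroRep k n ε
  | M :: L => M.dsum (dsumList k n ε L)

/-- Indecomposable representations. -/
def ARep.Indec (M : ARep k n ε) : Prop :=
  ¬M.IsZero ∧ ∀ A B : ARep k n ε, M.Iso (A.dsum B) → A.IsZero ∨ B.IsZero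

/-- `A` is a direct summand of `T`. -/
def ARep.IsSummand (A T : ARep k n ε) : Prop := ∃ B : ARep k n ε, T.Iso (A.dsum B)

/-- A representation is basic when it has no repeated indecomposable direct summand. -/
def ARep.Basic (T : ARep k n ε) : Prop :=
  ∀ A : ARep k n ε, A.Indec → ¬(A.dsum A).IsSummand T

/-- A short exact sequence `0 → B → E → A → 0`. -/
structure SES (B A : ARep k n ε) where
  E : ARep k n ε
  ι : B.Hom E
  π : E.Hom A
  inj : ∀ x, Function.Injective (ι.app x)
  surj : ∀ x, Function.Surjective (π.app x)
  exct : ∀ x (v : E.V x), π.app x v = 0 ↔ ∃ u, ι.app x u = v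

/-- A short exact sequence splits. -/
def SES.Splits {B A : ARep k n ε} (σ : SES B A) : Prop :=
  ∃ r : σ.E.Hom B, ∀ x (v : B.V x), r.app x (σ.ι.app x v) = v

/-- `Ext¹(A, B) = 0` : every short exact sequence `0 → B → E → A → 0` splits. -/
def ExtZero (A B : ARep k n ε) : Prop := ∀ σ : SES B A, σ.Splits

/-- `Ext¹(A,B) ≅ k`, generated by (the class of) a short exact sequence
`0 → B → E → A → 0` with indecomposable middle term `E`: there is a non-split such
sequence `σ` with `σ.E` indecomposable such that every non-split sequence is equivalent
to a nonzero scalar multiple of `σ`. -/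
def ExtOneDimIndecMid (A B : ARep k n ε) : Prop :=
  ∃ σ : SES B A, ¬σ.Splits ∧ σ.E.Indec ∧
    ∀ τ : SES B A, ¬τ.Splits → ∃ c : k, c ≠ 0 ∧
      ∃ φ : σ.E.Hom τ.E, (∀ x, Function.Bijective (φ.app x)) ∧
        (∀ x (v : B.V x), φ.app x (σ.ι.app x v) = τ.ι.app x v) ∧
        (∀ x (v : σ.E.V x), τ.π.app x (φ.app x v) = c • σ.π.app x v)

/-- Almost rigid representations. -/
def AlmostRigid (T : ARep k n ε) : Prop :=
  T.Basic ∧ ∀ A B : ARep k n ε, A.Indec → B.Indec → A.IsSummand T → B.IsSummand T →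
    ExtZero A B ∨ ExtOneDimIndecMid A B

/-- Maximal almost rigid representations. -/
def MaxAlmostRigid (T : ARep k n ε) : Prop :=
  AlmostRigid T ∧ ∀ M : ARep k n ε, ¬M.IsZero → ¬AlmostRigid (T.dsum M)

/-- `f` is a section. -/
def ARep.Hom.IsSection {M N : ARep k n ε} (f : M.Hom N) : Prop :=
  ∃ g : N.Hom M, ∀ x (v : M.V x), g.app x (f.app x v) = v

/-- `f` is a retraction. -/
def ARep.Hom.IsRetraction {M N : ARep k n ε} (f : M.Hom N) : Prop :=
  ∃ g : N.Hom M, ∀ x (v : N.V x), f.app x (g.app x v) = v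

/-- Irreducible morphisms: `f` is neither a section nor a retraction, and in every
factorization `f = g ∘ h` either `h` is a section or `g` is a retraction. -/
def ARep.Hom.Irred {M N : ARep k n ε} (f : M.Hom N) : Prop :=
  ¬f.IsSection ∧ ¬f.IsRetraction ∧
    ∀ (Z : ARep k n ε) (h : M.Hom Z) (g : Z.Hom N),
      (∀ x (v : M.V x), f.app x v = g.app x (h.app x v)) → h.IsSection ∨ g.IsRetraction

/-- Subrepresentations : families of subspaces closed under the structure maps. -/
structure Subrep (M : ARep k n ε) where
  U : ∀ x, Submodule k (M.V x)
  fwd_mem : ∀ i, ∀ v ∈ U i, M.fwd i v ∈ U (i + 1)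
  bwd_mem : ∀ i, ∀ v ∈ U (i + 1), M.bwd i v ∈ U i

/-- The central charge `Z(M) = Σ_{x=1}^{n+2} dim_k(M_x) · (p_x − p_{x−1})`. -/
def charge (p : ℕ → ℂ) (M : ARep k n ε) : ℂ :=
  ∑ x ∈ Finset.Icc 1 (n + 2), (Module.finrank k (M.V x) : ℂ) * (p x - p (x - 1))

/-- The central charge of a subrepresentation. -/
def subCharge (p : ℕ → ℂ) {M : ARep k n ε} (L : Subrep M) : ℂ :=
  ∑ x ∈ Finset.Icc 1 (n + 2), (Module.finrank k (L.U x) : ℂ) * (p x - p (x - 1))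

/-- The representation `F(T) = ⊕_{γ(a,b) ∈ T} M(a+1, b)` attached to a collection `T` of
segments of the polygon `P(Q)`. -/
def FRep (k : Type) [Field k] (n : ℕ) (ε : ℕ → Bool) (T : Finset (ℕ × ℕ)) : ARep k n ε :=
  dsumList k n ε (T.toList.map fun e => intervalRep k n ε (e.1 + 1) e.2)

end CambrianA

namespace CambrianA

/-- if `Q` is not linearly oriented, the set `{H(α), C(α) : α ∈ Q₁}` equals
the set of interval representations supported on the maximal increasing and maximal
decreasing paths of `Q`. -/
theorem stmt_4 (k : Type) [Field k] (n : ℕ) (ε : ℕ → Bool)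
    (hnl : ¬((∀ i, 1 ≤ i → i ≤ n + 1 → ε i = true) ∨
        (∀ i, 1 ≤ i → i ≤ n + 1 → ε i = false))) :
    {M : ARep k n ε | ∃ a, 1 ≤ a ∧ a ≤ n + 1 ∧ ∃ lo hi,
        (IsHook n ε a lo hi ∨ IsCohook n ε a lo hi) ∧ M = intervalRep k n ε lo hi} =
      {M : ARep k n ε | ∃ i j, (MaxIncr n ε i j ∧ M = intervalRep k n ε i j) ∨
        (MaxDecr n ε i j ∧ M = intervalRep k n ε j i)} := by
  ext M
  simp only [Set.mem_setOf_eq]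
  constructor
  · rintro ⟨a, h1, h2, lo, hi, h | h, rfl⟩
    · unfold IsHook at h
      split_ifs at h with ha
      · obtain ⟨rfl, h3, h4, h5, h6⟩ := h
        exact ⟨hi, lo, Or.inr ⟨⟨h3, h4, by omega, h5, Or.inr ha, h6⟩, rfl⟩⟩
      · obtain ⟨rfl, h3, h4, h5, h6⟩ := h
        exact ⟨a + 1, hi, Or.inl ⟨⟨by omega, h3, h4, h5, Or.inr (by simpa using ha), h6⟩, rfl⟩⟩
    · unfold IsCohook at h
      split_ifs at h with ha
      · obtain ⟨rfl, h3, h4, h5, h6⟩ := h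
        exact ⟨hi, a + 1, Or.inr ⟨⟨by omega, h3, h4, h5, h6, Or.inr (by simpa using ha)⟩, rfl⟩⟩
      · obtain ⟨rfl, h3, h4, h5, h6⟩ := h
        exact ⟨lo, hi, Or.inl ⟨⟨h3, h4, by omega, h5, h6, Or.inr (by simpa using ha)⟩, rfl⟩⟩
  · rintro ⟨i, j, ⟨⟨h1, h2, h3, h4, h5, h6⟩, rfl⟩ | ⟨⟨h1, h2, h3, h4, h5, h6⟩, rfl⟩⟩
    · by_cases hi : i = 1
      · by_cases hj : j = n + 2
        · exact absurd (Or.inl fun l hl hl' => h4 l (by omega) (by omega)) hnl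
        · have hf : ε j = false := h6.resolve_left hj
          refine ⟨j, by omega, by omega, i, j, Or.inr ?_, rfl⟩
          rw [IsCohook, if_neg (by simp [hf])]
          exact ⟨rfl, h1, h2, h4, h5⟩
      · have hf : ε (i - 1) = false := h5.resolve_left hi
        refine ⟨i - 1, by omega, by omega, i, j, Or.inl ?_, rfl⟩
        rw [IsHook, if_neg (by simp [hf]), Nat.sub_add_cancel h1]
        exact ⟨rfl, h2, h3, h4, h6⟩
    · by_cases hj : j = 1
      · by_cases hi : i = n + 2
        · exact absurd (Or.inr fun l hl hl' => h4 l (by omega) (by omega)) hnl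
        · have hf : ε i = true := h5.resolve_left hi
          refine ⟨i, by omega, by omega, j, i, Or.inl ?_, rfl⟩
          rw [IsHook, if_pos hf]
          exact ⟨rfl, h1, h2, h4, h6⟩
      · have hf : ε (j - 1) = true := h6.resolve_left hj
        refine ⟨j - 1, by omega, by omega, j, i, Or.inr ?_, rfl⟩
        rw [IsCohook, if_pos hf, Nat.sub_add_cancel h1]
        exact ⟨rfl, h2, h3, h4, h5⟩

end CambrianA
end
end

section
/- The map F sending a triangulation T of P(Q) to the representation F(T) = ⊕_{γ(a,b) ∈ T} M(a+1, b) is a bijection from the set of triangulations of P(Q) onto the set of isomorphism classes of maximal almost rigid representations of Q. -/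
open scoped Classical

noncomputable section

namespace CambrianA

set_option linter.unusedVariables false
set_option linter.unusedSimpArgs false

section General
variable {k : Type} [Field k] {n : ℕ} {ε : ℕ → Bool}

/-- The inverse of a bijective morphism. -/
def ARep.Hom.inv {M N : ARep k n ε} (f : M.Hom N) (hf : ∀ x, Function.Bijective (f.app x)) :
    N.Hom M where
  app x := (LinearEquiv.ofBijective (f.app x) (hf x)).symm.toLinearMap
  comm_fwd i v := by
    apply (hf (i+1)).1
    obtain ⟨w, rfl⟩ := (hf i).2 v
    have h1 : ∀ x (u : N.V x), f.app x ((LinearEquiv.ofBijective (f.app x) (hf x)).symm u) = u :=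
      fun x u => (LinearEquiv.ofBijective (f.app x) (hf x)).apply_symm_apply u
    simp only [LinearEquiv.coe_coe]
    rw [f.comm_fwd, h1, h1]
  comm_bwd i v := by
    apply (hf i).1
    obtain ⟨w, rfl⟩ := (hf (i+1)).2 v
    have h1 : ∀ x (u : N.V x), f.app x ((LinearEquiv.ofBijective (f.app x) (hf x)).symm u) = u :=
      fun x u => (LinearEquiv.ofBijective (f.app x) (hf x)).apply_symm_apply u
    simp only [LinearEquiv.coe_coe]
    rw [f.comm_bwd, h1, h1]

theorem ARep.Hom.app_inv {M N : ARep k n ε} (f : M.Hom N)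
    (hf : ∀ x, Function.Bijective (f.app x)) (x : ℕ) (v : N.V x) :
    f.app x ((f.inv hf).app x v) = v :=
  (LinearEquiv.ofBijective (f.app x) (hf x)).apply_symm_apply v

theorem ARep.Hom.inv_app {M N : ARep k n ε} (f : M.Hom N)
    (hf : ∀ x, Function.Bijective (f.app x)) (x : ℕ) (v : M.V x) :
    (f.inv hf).app x (f.app x v) = v :=
  (LinearEquiv.ofBijective (f.app x) (hf x)).symm_apply_apply v

theorem ARep.Hom.inv_bij {M N : ARep k n ε} (f : M.Hom N)
    (hf : ∀ x, Function.Bijective (f.app x)) (x : ℕ) : Function.Bijective ((f.inv hf).app x) :=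
  (LinearEquiv.ofBijective (f.app x) (hf x)).symm.bijective

theorem ARep.Hom.comp_apply {M N P : ARep k n ε} (g : N.Hom P) (f : M.Hom N) (x : ℕ)
    (v : M.V x) : (g.comp f).app x v = g.app x (f.app x v) := rfl

theorem ARep.Hom.id_apply (M : ARep k n ε) (x : ℕ)
    (v : M.V x) : (ARep.Hom.id M).app x v = v := rfl

theorem ARep.Iso.refl (M : ARep k n ε) : M.Iso M :=
  ⟨ARep.Hom.id M, fun _ => Function.bijective_id⟩

theorem ARep.Iso.symm {M N : ARep k n ε} (h : M.Iso N) : N.Iso M := by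
  obtain ⟨f, hf⟩ := h
  exact ⟨f.inv hf, f.inv_bij hf⟩

theorem ARep.Iso.trans {M N P : ARep k n ε} (h : M.Iso N) (h' : N.Iso P) : M.Iso P := by
  obtain ⟨f, hf⟩ := h
  obtain ⟨g, hg⟩ := h'
  exact ⟨g.comp f, fun x => (hg x).comp (hf x)⟩

theorem ARep.iso_of_inverse {M N : ARep k n ε} (f : M.Hom N) (g : N.Hom M)
    (h1 : ∀ x v, g.app x (f.app x v) = v) (h2 : ∀ x v, f.app x (g.app x v) = v) : M.Iso N :=
  ⟨f, fun x => ⟨Function.LeftInverse.injective (h1 x), Function.RightInverse.surjective (h2 x)⟩⟩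

/-- First injection. -/
def inlH (M N : ARep k n ε) : M.Hom (M.dsum N) where
  app x := LinearMap.inl k (M.V x) (N.V x)
  comm_fwd i v := Prod.ext rfl (map_zero (N.fwd i)).symm
  comm_bwd i v := Prod.ext rfl (map_zero (N.bwd i)).symm

/-- Second injection. -/
def inrH (M N : ARep k n ε) : N.Hom (M.dsum N) where
  app x := LinearMap.inr k (M.V x) (N.V x)
  comm_fwd i v := Prod.ext (map_zero (M.fwd i)).symm rfl
  comm_bwd i v := Prod.ext (map_zero (M.bwd i)).symm rfl

/-- First projection. -/
def fstH (M N : ARep k n ε) : (M.dsum N).Hom M where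
  app x := LinearMap.fst k (M.V x) (N.V x)
  comm_fwd _ _ := rfl
  comm_bwd _ _ := rfl

/-- Second projection. -/
def sndH (M N : ARep k n ε) : (M.dsum N).Hom N where
  app x := LinearMap.snd k (M.V x) (N.V x)
  comm_fwd _ _ := rfl
  comm_bwd _ _ := rfl

/-- Map to a direct sum. -/
def pairH {M N P : ARep k n ε} (f : P.Hom M) (g : P.Hom N) : P.Hom (M.dsum N) where
  app x := (f.app x).prod (g.app x)
  comm_fwd i v := Prod.ext (f.comm_fwd i v) (g.comm_fwd i v)
  comm_bwd i v := Prod.ext (f.comm_bwd i v) (g.comm_bwd i v)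

theorem pairH_apply {M N P : ARep k n ε} (f : P.Hom M) (g : P.Hom N) (x : ℕ) (v : P.V x) :
    (pairH f g).app x v = (f.app x v, g.app x v) := rfl

theorem fstH_apply {M N : ARep k n ε} (x : ℕ) (v : (M.dsum N).V x) :
    (fstH M N).app x v = v.1 := rfl
theorem sndH_apply {M N : ARep k n ε} (x : ℕ) (v : (M.dsum N).V x) :
    (sndH M N).app x v = v.2 := rfl
theorem inlH_apply {M N : ARep k n ε} (x : ℕ) (v : M.V x) :
    (inlH M N).app x v = (v, 0) := rfl
theorem inrH_apply {M N : ARep k n ε} (x : ℕ) (v : N.V x) :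
    (inrH M N).app x v = (0, v) := rfl

/-- The zero morphism. -/
def zeroH (M N : ARep k n ε) : M.Hom N where
  app x := 0
  comm_fwd _ _ := by simp
  comm_bwd _ _ := by simp

theorem dsum_congr {M M' N N' : ARep k n ε} (h : M.Iso M') (h' : N.Iso N') :
    (M.dsum N).Iso (M'.dsum N') := by
  obtain ⟨f, hf⟩ := h
  obtain ⟨g, hg⟩ := h'
  exact ⟨pairH (f.comp (fstH M N)) (g.comp (sndH M N)), fun x => Function.Bijective.prodMap (hf x) (hg x)⟩

theorem dsum_comm (M N : ARep k n ε) : (M.dsum N).Iso (N.dsum M) :=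
  ARep.iso_of_inverse (pairH (sndH M N) (fstH M N)) (pairH (sndH N M) (fstH N M))
    (fun _ _ => rfl) (fun _ _ => rfl)

theorem dsum_assoc (M N P : ARep k n ε) : ((M.dsum N).dsum P).Iso (M.dsum (N.dsum P)) :=
  ARep.iso_of_inverse
    (pairH ((fstH M N).comp (fstH _ P)) (pairH ((sndH M N).comp (fstH _ P)) (sndH _ P)))
    (pairH (pairH (fstH M _) ((fstH N P).comp (sndH M _))) ((sndH N P).comp (sndH M _)))
    (fun _ _ => rfl) (fun _ _ => rfl)

theorem dsum_zero_left {M N : ARep k n ε} (h : M.IsZero) : (M.dsum N).Iso N :=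
  ARep.iso_of_inverse (sndH M N) (inrH M N)
    (fun x v => Prod.ext (h x _).symm rfl) (fun _ _ => rfl)

theorem zeroRep_isZero : (zeroRep k n ε).IsZero := by
  intro x v
  have hfib : fiber k False = ⊥ := if_neg (fun h : False => h.elim)
  obtain ⟨w, hw⟩ := v
  apply Subtype.ext
  have hb : w ∈ (⊥ : Submodule k k) := hfib ▸ hw
  exact (Submodule.mem_bot k).1 hb

theorem zero_iso {M N : ARep k n ε} (hM : M.IsZero) (hN : N.IsZero) : M.Iso N :=
  ARep.iso_of_inverse (zeroH M N) (zeroH N M) (fun x v => (hM x v).symm)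
    (fun x v => (hN x v).symm)

theorem ARep.Iso.isZero {M N : ARep k n ε} (h : M.Iso N) (hM : M.IsZero) : N.IsZero := by
  obtain ⟨f, hf⟩ := h
  intro x v
  obtain ⟨w, rfl⟩ := (hf x).2 v
  rw [hM x w, map_zero]

theorem isZero_dsum {M N : ARep k n ε} (h : (M.dsum N).IsZero) : M.IsZero ∧ N.IsZero :=
  ⟨fun x v => congrArg Prod.fst (h x (v, 0)), fun x v => congrArg Prod.snd (h x (0, v))⟩

/-- The kernel of a morphism. -/
def kerRep {M N : ARep k n ε} (g : M.Hom N) : ARep k n ε where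
  V x := ↥(LinearMap.ker (g.app x))
  acg _ := by infer_instance
  mod _ := by infer_instance
  fdim _ := by infer_instance
  triv x hx v := Subtype.ext (M.triv x hx v.1)
  fwd i := (M.fwd i).restrict (p := LinearMap.ker (g.app i)) (q := LinearMap.ker (g.app (i+1))) (by
    intro v hv
    rw [LinearMap.mem_ker] at *
    rw [g.comm_fwd, hv, map_zero])
  bwd i := (M.bwd i).restrict (p := LinearMap.ker (g.app (i+1))) (q := LinearMap.ker (g.app i)) (by
    intro v hv
    rw [LinearMap.mem_ker] at *
    rw [g.comm_bwd, hv, map_zero])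
  fwd_zero i h := by
    apply LinearMap.ext; intro v; apply Subtype.ext
    simp [LinearMap.restrict_apply, M.fwd_zero i h]
  bwd_zero i h := by
    apply LinearMap.ext; intro v; apply Subtype.ext
    simp [LinearMap.restrict_apply, M.bwd_zero i h]

theorem split_iso {A T : ARep k n ε} (f : A.Hom T) (g : T.Hom A)
    (h : ∀ x v, g.app x (f.app x v) = v) : T.Iso (A.dsum (kerRep g)) := by
  refine ARep.iso_of_inverse
    (M := T) (N := A.dsum (kerRep g))
    { app := fun x => (g.app x).prod
        ((LinearMap.id - (f.app x).comp (g.app x)).codRestrict (LinearMap.ker (g.app x)) (by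
          intro v
          simp [h]))
      comm_fwd := fun i v => Prod.ext (g.comm_fwd i v) (Subtype.ext ?_)
      comm_bwd := fun i v => Prod.ext (g.comm_bwd i v) (Subtype.ext ?_) }
    { app := fun x => (f.app x).coprod (LinearMap.ker (g.app x)).subtype
      comm_fwd := fun i v => ?_
      comm_bwd := fun i v => ?_ } ?_ ?_
  · change T.fwd i v - f.app _ (g.app _ (T.fwd i v)) = T.fwd i (v - f.app i (g.app i v))
    rw [g.comm_fwd, f.comm_fwd, map_sub]
  · change T.bwd i v - f.app _ (g.app _ (T.bwd i v)) = T.bwd i (v - f.app _ (g.app _ v))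
    rw [g.comm_bwd, f.comm_bwd, map_sub]
  · change f.app _ (A.fwd i v.1) + T.fwd i v.2.1 = T.fwd i (f.app i v.1 + v.2.1)
    rw [f.comm_fwd, map_add]
  · change f.app _ (A.bwd i v.1) + T.bwd i v.2.1 = T.bwd i (f.app _ v.1 + v.2.1)
    rw [f.comm_bwd, map_add]
  · intro x v
    change f.app x (g.app x v) + (v - f.app x (g.app x v)) = v
    abel
  · intro x v
    have h2 : g.app x v.2.1 = 0 := v.2.2
    refine Prod.ext ?_ (Subtype.ext ?_)
    · change g.app x (f.app x v.1 + v.2.1) = v.1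
      rw [map_add, h, h2, add_zero]
    · change (f.app x v.1 + v.2.1) - f.app x (g.app x (f.app x v.1 + v.2.1)) = v.2.1
      rw [map_add, h, h2, add_zero]
      abel

theorem isSummand_iff {A T : ARep k n ε} : A.IsSummand T ↔
    ∃ (f : A.Hom T) (g : T.Hom A), ∀ x v, g.app x (f.app x v) = v := by
  constructor
  · rintro ⟨B, φ, hφ⟩
    refine ⟨(φ.inv hφ).comp (inlH A B), (fstH A B).comp φ, fun x v => ?_⟩
    simp only [ARep.Hom.comp_apply, ARep.Hom.app_inv]
    rfl
  · rintro ⟨f, g, h⟩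
    exact ⟨kerRep g, split_iso f g h⟩

theorem isSummand_trans {A B T : ARep k n ε} (h : A.IsSummand B) (h' : B.IsSummand T) :
    A.IsSummand T := by
  rw [isSummand_iff] at *
  obtain ⟨f, g, h⟩ := h
  obtain ⟨f', g', h'⟩ := h'
  exact ⟨f'.comp f, g.comp g', fun x v => by simp only [ARep.Hom.comp_apply, h, h']⟩

theorem isSummand_of_iso {A T : ARep k n ε} (h : A.Iso T) : A.IsSummand T := by
  obtain ⟨f, hf⟩ := h
  rw [isSummand_iff]
  exact ⟨f, f.inv hf, fun x v => f.inv_app hf x v⟩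

theorem isSummand_left (A B : ARep k n ε) : A.IsSummand (A.dsum B) := ⟨B, ARep.Iso.refl _⟩

theorem Indec.of_iso {A B : ARep k n ε} (h : A.Iso B) (hA : A.Indec) : B.Indec :=
  ⟨fun hB => hA.1 (h.symm.isZero hB), fun X Y hXY => hA.2 X Y (h.trans hXY)⟩

theorem Basic.of_iso {S T : ARep k n ε} (h : S.Iso T) (hS : S.Basic) : T.Basic :=
  fun A hA hs => hS A hA (isSummand_trans hs (isSummand_of_iso h.symm))

theorem AlmostRigid.of_iso {S T : ARep k n ε} (h : S.Iso T) (hS : AlmostRigid S) :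
    AlmostRigid T :=
  ⟨Basic.of_iso h hS.1, fun A B hA hB hAT hBT => hS.2 A B hA hB
    (isSummand_trans hAT (isSummand_of_iso h.symm))
    (isSummand_trans hBT (isSummand_of_iso h.symm))⟩

/-- Transport of short exact sequences along isomorphisms. -/
def SES.pull {A B A' B' : ARep k n ε} (a : A'.Hom A)
    (ha : ∀ x, Function.Bijective (a.app x)) (b : B.Hom B')
    (hb : ∀ x, Function.Bijective (b.app x)) (τ : SES B' A') : SES B A where
  E := τ.E
  ι := τ.ι.comp b
  π := a.comp τ.π
  inj x := (τ.inj x).comp (hb x).1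
  surj x := (ha x).2.comp (τ.surj x)
  exct x v := by
    simp only [ARep.Hom.comp_apply]
    constructor
    · intro h
      have : τ.π.app x v = 0 := (ha x).1 (by rw [h, map_zero])
      obtain ⟨u, hu⟩ := (τ.exct x v).1 this
      obtain ⟨w, rfl⟩ := (hb x).2 u
      exact ⟨w, hu⟩
    · rintro ⟨u, hu⟩
      rw [(τ.exct x v).2 ⟨_, hu⟩, map_zero]

theorem SES.pull_splits {A B A' B' : ARep k n ε} (a : A'.Hom A)
    (ha : ∀ x, Function.Bijective (a.app x)) (b : B.Hom B')
    (hb : ∀ x, Function.Bijective (b.app x)) (τ : SES B' A') :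
    (τ.pull a ha b hb).Splits ↔ τ.Splits := by
  constructor
  · rintro ⟨r, hr⟩
    refine ⟨b.comp r, fun x v => ?_⟩
    obtain ⟨w, rfl⟩ := (hb x).2 v
    exact congrArg (b.app x) (hr x w)
  · rintro ⟨r, hr⟩
    refine ⟨(b.inv hb).comp r, fun x v => ?_⟩
    change (b.inv hb).app x (r.app x (τ.ι.app x (b.app x v))) = v
    rw [hr, ARep.Hom.inv_app]

theorem ExtZero.of_iso {A B A' B' : ARep k n ε} (hA : A.Iso A') (hB : B.Iso B')
    (h : ExtZero A B) : ExtZero A' B' := by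
  obtain ⟨a, ha⟩ := hA.symm
  obtain ⟨b, hb⟩ := hB
  intro τ
  exact (SES.pull_splits a ha b hb τ).1 (h _)

theorem ExtOneDimIndecMid.of_iso {A B A' B' : ARep k n ε} (hA : A.Iso A') (hB : B.Iso B')
    (h : ExtOneDimIndecMid A B) : ExtOneDimIndecMid A' B' := by
  obtain ⟨a, ha⟩ := hA
  obtain ⟨b, hb⟩ := hB
  obtain ⟨σ, hσ, hE, h⟩ := h
  refine ⟨σ.pull a ha (b.inv hb) (b.inv_bij hb), ?_, hE, ?_⟩
  · rw [SES.pull_splits]; exact hσ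
  · intro τ hτ
    obtain ⟨c, hc, φ, h1, h2, h3⟩ := h (τ.pull (a.inv ha) (a.inv_bij ha) b hb)
      (by rw [SES.pull_splits]; exact hτ)
    refine ⟨c, hc, φ, h1, fun x v => ?_, fun x v => ?_⟩
    · have := h2 x ((b.inv hb).app x v)
      refine this.trans ?_
      change τ.ι.app x (b.app x _) = _
      rw [ARep.Hom.app_inv]
    · have := congrArg (a.app x) (h3 x v)
      rw [map_smul] at this
      refine Eq.trans ?_ this
      change _ = a.app x ((a.inv ha).app x _)
      rw [ARep.Hom.app_inv]
      rfl

/-- The condition on a pair of representations in the definition of almost rigidity. -/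
def GoodPair (A B : ARep k n ε) : Prop := ExtZero A B ∨ ExtOneDimIndecMid A B

theorem GoodPair.of_iso {A B A' B' : ARep k n ε} (hA : A.Iso A') (hB : B.Iso B')
    (h : GoodPair A B) : GoodPair A' B' :=
  h.imp (ExtZero.of_iso hA hB) (ExtOneDimIndecMid.of_iso hA hB)

/-- A nonsplit sequence with decomposable middle term obstructs `GoodPair`. -/
theorem not_goodPair {A B : ARep k n ε} (σ : SES B A) (h : ¬ σ.Splits) (hE : ¬ σ.E.Indec) :
    ¬ GoodPair A B := by
  rintro (h0 | ⟨τ, _, hτE, h1⟩)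
  · exact h (h0 σ)
  · obtain ⟨c, _, φ, hφ, _⟩ := h1 σ h
    exact hE (Indec.of_iso ⟨φ, hφ⟩ hτE)

/-- A section gives a splitting. -/
theorem SES.splits_of_section {A B : ARep k n ε} (σ : SES B A) (s : A.Hom σ.E)
    (hs : ∀ x v, σ.π.app x (s.app x v) = v) : σ.Splits := by
  have key : ∀ x (v : σ.E.V x), ∃ u, σ.ι.app x u = v - s.app x (σ.π.app x v) := fun x v =>
    (σ.exct x _).1 (by rw [map_sub, hs, sub_self])
  choose r hr using key
  refine ⟨{ app := fun x => { toFun := r x, map_add' := ?_, map_smul' := ?_ }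
            comm_fwd := ?_, comm_bwd := ?_ }, ?_⟩
  · intro u v
    apply σ.inj x
    simp only [map_add, hr]
    abel
  · intro c v
    apply σ.inj x
    simp only [map_smul, hr, smul_sub, RingHom.id_apply]
  · intro i v
    apply σ.inj
    simp only [LinearMap.coe_mk, AddHom.coe_mk, σ.ι.comm_fwd, hr, map_sub, s.comm_fwd,
      σ.π.comm_fwd]
  · intro i v
    apply σ.inj
    simp only [LinearMap.coe_mk, AddHom.coe_mk, σ.ι.comm_bwd, hr, map_sub, s.comm_bwd,
      σ.π.comm_bwd]
  · intro x v
    apply σ.inj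
    simp only [LinearMap.coe_mk, AddHom.coe_mk, hr]
    rw [(σ.exct x _).2 ⟨v, rfl⟩, map_zero, sub_zero]

/-- Short five lemma. -/
theorem SES.five {A B : ARep k n ε} (σ τ : SES B A) (c : k) (hc : c ≠ 0) (φ : σ.E.Hom τ.E)
    (h1 : ∀ x (v : B.V x), φ.app x (σ.ι.app x v) = τ.ι.app x v)
    (h2 : ∀ x (v : σ.E.V x), τ.π.app x (φ.app x v) = c • σ.π.app x v) (x : ℕ) :
    Function.Bijective (φ.app x) := by
  constructor
  · rw [injective_iff_map_eq_zero]
    intro v hv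
    have := h2 x v
    rw [hv, map_zero] at this
    have h3 : σ.π.app x v = 0 := by
      rcases smul_eq_zero.1 this.symm with h | h
      · exact absurd h hc
      · exact h
    obtain ⟨u, rfl⟩ := (σ.exct x v).1 h3
    rw [h1] at hv
    have : u = 0 := τ.inj x (by rw [hv, map_zero])
    rw [this, map_zero]
  · intro w
    obtain ⟨v, hv⟩ := σ.surj x (c⁻¹ • τ.π.app x w)
    have : τ.π.app x (w - φ.app x v) = 0 := by
      rw [map_sub, h2, hv, smul_smul, mul_inv_cancel₀ hc, one_smul, sub_self]
    obtain ⟨u, hu⟩ := (τ.exct x _).1 this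
    refine ⟨v + σ.ι.app x u, ?_⟩
    rw [map_add, h1, hu]
    abel

end General

end CambrianA

namespace CambrianA

section Interval

/-- The interval representation attached to a segment. -/
abbrev Iv (k : Type) [Field k] (n : ℕ) (ε : ℕ → Bool) (e : ℕ × ℕ) : ARep k n ε :=
  intervalRep k n ε (e.1 + 1) e.2

/-- Vertex `x` is in the support of `Iv e`. -/
def Sp (e : ℕ × ℕ) (x : ℕ) : Prop := e.1 < x ∧ x ≤ e.2

variable {k : Type} [Field k] {n : ℕ} {ε : ℕ → Bool} {e f : ℕ × ℕ}

theorem suppCond_iff (he : ValidPair n e) (x : ℕ) : SuppCond n (e.1 + 1) e.2 x ↔ Sp e x := by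
  unfold SuppCond Sp ValidPair at *
  omega

/-- The coordinate of an element of `Iv e`. -/
def co (k : Type) [Field k] (n : ℕ) (ε : ℕ → Bool) (e : ℕ × ℕ) (x : ℕ) :
    (Iv k n ε e).V x →ₗ[k] k :=
  (fiber k (SuppCond n (e.1 + 1) e.2 x)).subtype

theorem co_inj {x : ℕ} {u v : (Iv k n ε e).V x} (h : co k n ε e x u = co k n ε e x v) : u = v :=
  Subtype.ext h

theorem co_zero (he : ValidPair n e) {x : ℕ} (hx : ¬ Sp e x) (v : (Iv k n ε e).V x) :
    co k n ε e x v = 0 := by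
  rw [← suppCond_iff he] at hx
  have hfib : fiber k (SuppCond n (e.1 + 1) e.2 x) = ⊥ := if_neg hx
  obtain ⟨w, hw⟩ := v
  have hb : w ∈ (⊥ : Submodule k k) := hfib ▸ hw
  exact (Submodule.mem_bot k).1 hb

/-- The element of the fiber with a given coordinate. -/
def fiberEl (k : Type) [Field k] (P : Prop) : k →ₗ[k] fiber k P :=
  if h : P then
    LinearMap.codRestrict (fiber k P) LinearMap.id
      (fun c => by rw [fiber, if_pos h]; exact Submodule.mem_top)
  else 0

theorem fiberEl_coe (P : Prop) (c : k) : ((fiberEl k P c : fiber k P) : k) = if P then c else 0 := by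
  unfold fiberEl
  split_ifs with h
  · rfl
  · rfl

/-- The element of `Iv e` with a given coordinate. -/
def el (k : Type) [Field k] (n : ℕ) (ε : ℕ → Bool) (e : ℕ × ℕ) (x : ℕ) :
    k →ₗ[k] (Iv k n ε e).V x :=
  fiberEl k (SuppCond n (e.1 + 1) e.2 x)

theorem co_el (he : ValidPair n e) (x : ℕ) (c : k) :
    co k n ε e x (el k n ε e x c) = if Sp e x then c else 0 :=
  (fiberEl_coe _ c).trans (if_congr (suppCond_iff he x) rfl rfl)

theorem co_el_pos (he : ValidPair n e) {x : ℕ} (hx : Sp e x) (c : k) :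
    co k n ε e x (el k n ε e x c) = c := by rw [co_el he, if_pos hx]

theorem el_co (he : ValidPair n e) (x : ℕ) (v : (Iv k n ε e).V x) :
    el k n ε e x (co k n ε e x v) = v := by
  apply co_inj
  rw [co_el he]
  split_ifs with h
  · rfl
  · rw [co_zero he h]

theorem fiberMap_coe (P Q : Prop) (v : fiber k P) :
    ((fiberMap k P Q v : fiber k Q) : k) = if P ∧ Q then (v : k) else 0 := by
  unfold fiberMap
  split_ifs with h
  · rfl
  · rfl

theorem co_fwd (he : ValidPair n e) (i : ℕ) (v : (Iv k n ε e).V i) :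
    co k n ε e (i+1) ((Iv k n ε e).fwd i v) =
      if ε i = true ∧ Sp e (i+1) then co k n ε e i v else 0 := by
  change (fiber k (SuppCond n (e.1 + 1) e.2 (i+1))).subtype ((if ε i = true then
    fiberMap k (SuppCond n (e.1 + 1) e.2 i) (SuppCond n (e.1 + 1) e.2 (i + 1)) else 0) v) = _
  by_cases h : ε i = true
  · rw [if_pos h]
    simp only [h, true_and]
    refine (fiberMap_coe _ _ v).trans ?_
    refine (if_congr (and_congr (suppCond_iff he _) (suppCond_iff he _)) rfl rfl).trans ?_
    by_cases h1 : Sp e i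
    · simp only [h1, true_and]; rfl
    · simp only [h1, false_and, if_false]
      rw [co_zero he h1, ite_self]
  · rw [if_neg h, if_neg (fun h' => h h'.1)]
    exact map_zero _

theorem co_bwd (he : ValidPair n e) (i : ℕ) (v : (Iv k n ε e).V (i+1)) :
    co k n ε e i ((Iv k n ε e).bwd i v) =
      if ε i = false ∧ Sp e i then co k n ε e (i+1) v else 0 := by
  change (fiber k (SuppCond n (e.1 + 1) e.2 i)).subtype ((if ε i = true then 0 else
    fiberMap k (SuppCond n (e.1 + 1) e.2 (i+1)) (SuppCond n (e.1 + 1) e.2 i)) v) = _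
  by_cases h : ε i = true
  · rw [if_pos h, if_neg (fun h' => by simp [h'.1] at h)]
    exact map_zero _
  · rw [if_neg h]
    have h0 : ε i = false := by simpa using h
    simp only [h0, true_and]
    refine (fiberMap_coe _ _ v).trans ?_
    refine (if_congr (and_congr (suppCond_iff he _) (suppCond_iff he _)) rfl rfl).trans ?_
    by_cases h1 : Sp e (i+1)
    · simp only [h1, true_and]; rfl
    · simp only [h1, false_and, if_false]
      rw [co_zero he h1, ite_self]

/-- A compatible family of vectors gives a morphism from an interval representation. -/
def homFrom (he : ValidPair n e) {M : ARep k n ε} (v : ∀ x, M.V x)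
    (hf : ∀ i, ε i = true → Sp e i → M.fwd i (v i) = if Sp e (i+1) then v (i+1) else 0)
    (hb : ∀ i, ε i = false → Sp e (i+1) → M.bwd i (v (i+1)) = if Sp e i then v i else 0) :
    (Iv k n ε e).Hom M where
  app x := (co k n ε e x).smulRight (v x)
  comm_fwd i c := by
    simp only [LinearMap.smulRight_apply, map_smul, co_fwd he]
    by_cases h : ε i = true
    · by_cases h1 : Sp e i
      · rw [hf i h h1]
        by_cases h2 : Sp e (i+1) <;> simp [h, h2]
      · rw [co_zero he h1]; simp
    · simp [M.fwd_zero i (by simpa using h), h]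
  comm_bwd i c := by
    simp only [LinearMap.smulRight_apply, map_smul, co_bwd he]
    by_cases h : ε i = false
    · by_cases h1 : Sp e (i+1)
      · rw [hb i h h1]
        by_cases h2 : Sp e i <;> simp [h, h2]
      · rw [co_zero he h1]; simp
    · simp [M.bwd_zero i (by simpa using h), h]

theorem homFrom_app (he : ValidPair n e) {M : ARep k n ε} (v : ∀ x, M.V x) (hf) (hb)
    (x : ℕ) (c : (Iv k n ε e).V x) :
    (homFrom he v hf hb).app x c = co k n ε e x c • v x := rfl

/-- A compatible family of functionals gives a morphism to an interval representation. -/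
def homTo (he : ValidPair n e) {M : ARep k n ε} (φ : ∀ x, M.V x →ₗ[k] k)
    (hf : ∀ i, ε i = true → Sp e (i+1) → ∀ m,
      φ (i+1) (M.fwd i m) = if Sp e i then φ i m else 0)
    (hb : ∀ i, ε i = false → Sp e i → ∀ m,
      φ i (M.bwd i m) = if Sp e (i+1) then φ (i+1) m else 0) :
    M.Hom (Iv k n ε e) where
  app x := (el k n ε e x).comp (φ x)
  comm_fwd i m := by
    apply co_inj
    rw [co_fwd he]
    simp only [LinearMap.comp_apply, co_el he]
    by_cases h : ε i = true
    · by_cases h1 : Sp e (i+1)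
      · rw [hf i h h1]; simp [h, h1]
      · simp [h, h1]
    · simp [M.fwd_zero i (by simpa using h), h]
  comm_bwd i m := by
    apply co_inj
    rw [co_bwd he]
    simp only [LinearMap.comp_apply, co_el he]
    by_cases h : ε i = false
    · by_cases h1 : Sp e i
      · rw [hb i h h1]; simp [h, h1]
      · simp [h, h1]
    · simp [M.bwd_zero i (by simpa using h), h]

theorem co_homTo (he : ValidPair n e) {M : ARep k n ε} (φ : ∀ x, M.V x →ₗ[k] k) (hf) (hb)
    (x : ℕ) (m : M.V x) :
    co k n ε e x ((homTo he φ hf hb).app x m) = if Sp e x then φ x m else 0 := co_el he x _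

/-- The canonical morphism between interval representations. -/
def can (k : Type) [Field k] (he : ValidPair n e) (hf : ValidPair n f)
    (h1 : ∀ i, ε i = true → Sp e i → Sp f (i+1) → (Sp e (i+1) ↔ Sp f i))
    (h2 : ∀ i, ε i = false → Sp e (i+1) → Sp f i → (Sp e i ↔ Sp f (i+1))) :
    (Iv k n ε e).Hom (Iv k n ε f) :=
  homTo hf (fun x => co k n ε e x)
    (by
      intro i hi hs m
      rw [co_fwd he]
      by_cases h : Sp e i
      · simp [hi, h1 i hi h hs]
      · simp [co_zero he h])
    (by
      intro i hi hs m
      rw [co_bwd he]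
      by_cases h : Sp e (i+1)
      · simp [hi, h2 i hi h hs]
      · simp [co_zero he h])

theorem co_can (he : ValidPair n e) (hf : ValidPair n f) (h1) (h2) (x : ℕ)
    (m : (Iv k n ε e).V x) :
    co k n ε f x ((can k he hf h1 h2).app x m) = if Sp f x then co k n ε e x m else 0 :=
  co_homTo _ _ _ _ _ _

/-- scalar of an endomorphism is constant on the support -/
theorem end_const (he : ValidPair n e) (g : (Iv k n ε e).Hom (Iv k n ε e)) (x : ℕ)
    (hx : Sp e x) (hx' : Sp e (x+1)) :
    co k n ε e x (g.app x (el k n ε e x 1)) = co k n ε e (x+1) (g.app (x+1) (el k n ε e (x+1) 1)) := by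
  cases h : ε x
  · have h1 := congrArg (co k n ε e x) (g.comm_bwd x (el k n ε e (x+1) 1))
    have h2 : (Iv k n ε e).bwd x (el k n ε e (x+1) 1) = el k n ε e x 1 := by
      apply co_inj; rw [co_bwd he, co_el he, co_el he]; simp [h, hx, hx']
    rw [h2, co_bwd he, if_pos ⟨h, hx⟩] at h1
    exact h1
  · have h1 := congrArg (co k n ε e (x+1)) (g.comm_fwd x (el k n ε e x 1))
    have h2 : (Iv k n ε e).fwd x (el k n ε e x 1) = el k n ε e (x+1) 1 := by
      apply co_inj; rw [co_fwd he, co_el he, co_el he]; simp [h, hx, hx']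
    rw [h2, co_fwd he, if_pos ⟨h, hx'⟩] at h1
    exact h1.symm

/-- The scalar of an endomorphism of an interval. -/
def sc (g : (Iv k n ε e).Hom (Iv k n ε e)) : k := co k n ε e e.2 (g.app e.2 (el k n ε e e.2 1))

theorem sc_eq (he : ValidPair n e) (g : (Iv k n ε e).Hom (Iv k n ε e)) (x : ℕ) (hx : Sp e x) :
    co k n ε e x (g.app x (el k n ε e x 1)) = sc g := by
  obtain ⟨d, hd⟩ : ∃ d, e.2 = x + d := ⟨e.2 - x, by unfold Sp at hx; omega⟩
  induction d generalizing x with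
  | zero =>
    have : x = e.2 := by omega
    subst this; rfl
  | succ d ih =>
    rw [end_const he g x hx (by unfold Sp at *; omega)]
    exact ih (x+1) (by unfold Sp at *; omega) (by omega)

theorem el_eq_smul (x : ℕ) (c : k) : el k n ε e x c = c • el k n ε e x 1 := by
  rw [← map_smul, smul_eq_mul, mul_one]

theorem co_app (he : ValidPair n e) (g : (Iv k n ε e).Hom (Iv k n ε f)) (x : ℕ)
    (v : (Iv k n ε e).V x) :
    co k n ε f x (g.app x v) = co k n ε e x v * co k n ε f x (g.app x (el k n ε e x 1)) := by
  conv_lhs => rw [← el_co he x v, el_eq_smul, map_smul, map_smul, smul_eq_mul]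

theorem end_apply (he : ValidPair n e) (g : (Iv k n ε e).Hom (Iv k n ε e)) (x : ℕ)
    (v : (Iv k n ε e).V x) : g.app x v = sc g • v := by
  apply co_inj
  rw [co_app he, map_smul, smul_eq_mul]
  by_cases hx : Sp e x
  · rw [sc_eq he g x hx, mul_comm]
  · rw [co_zero he hx v]; ring

theorem key_zero (he : ValidPair n e) (hf : ValidPair n f) (hne : e ≠ f)
    (a : (Iv k n ε e).Hom (Iv k n ε f)) (b : (Iv k n ε f).Hom (Iv k n ε e)) :
    sc (b.comp a) = 0 := by
  -- it suffices to find a vertex where one of the maps vanishes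
  have main : ∃ x, Sp e x ∧ (co k n ε f x (a.app x (el k n ε e x 1)) = 0 ∨
      co k n ε e x (b.app x (el k n ε f x 1)) = 0) := by
    by_cases h1 : e.1 < f.1
    · refine ⟨e.1 + 1, ⟨by omega, he.1⟩, Or.inl (co_zero hf (by unfold Sp; omega) _)⟩
    by_cases h2 : f.2 < e.2
    · refine ⟨e.2, ⟨he.1, le_refl _⟩, Or.inl (co_zero hf (by unfold Sp; omega) _)⟩
    by_cases h3 : f.1 < e.1
    · have hx : ¬ Sp e e.1 := by unfold Sp; omega
      have hx1 : Sp e (e.1+1) := ⟨by omega, he.1⟩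
      have hy : Sp f e.1 := ⟨h3, by have := he.1; omega⟩
      have hy1 : Sp f (e.1+1) := ⟨by omega, by have := he.1; omega⟩
      refine ⟨e.1 + 1, hx1, ?_⟩
      cases h : ε e.1
      · left
        have h4 := congrArg (co k n ε f e.1) (a.comm_bwd e.1 (el k n ε e (e.1+1) 1))
        rw [co_bwd hf, if_pos ⟨h, hy⟩, co_app he, co_zero he hx, zero_mul] at h4
        exact h4.symm
      · right
        have h4 := congrArg (co k n ε e (e.1+1)) (b.comm_fwd e.1 (el k n ε f e.1 1))
        rw [co_fwd he, co_zero he hx, ite_self, co_app hf, co_fwd hf, if_pos ⟨h, hy1⟩,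
          co_el hf, if_pos hy, one_mul] at h4
        exact h4
    · have h4 : e.2 < f.2 := by
        rcases lt_or_ge e.2 f.2 with h | h
        · exact h
        · exact absurd (Prod.ext (by omega) (by omega)) hne
      have hx : Sp e e.2 := ⟨he.1, le_refl _⟩
      have hx1 : ¬ Sp e (e.2+1) := by unfold Sp; omega
      have hy : Sp f e.2 := ⟨by have := he.1; omega, by omega⟩
      have hy1 : Sp f (e.2+1) := ⟨by have := he.1; omega, by omega⟩
      refine ⟨e.2, hx, ?_⟩
      cases h : ε e.2
      · right
        have h4 := congrArg (co k n ε e e.2) (b.comm_bwd e.2 (el k n ε f (e.2+1) 1))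
        rw [co_bwd he, co_zero he hx1, ite_self, co_app hf, co_bwd hf, if_pos ⟨h, hy⟩,
          co_el hf, if_pos hy1, one_mul] at h4
        exact h4
      · left
        have h4 := congrArg (co k n ε f (e.2+1)) (a.comm_fwd e.2 (el k n ε e e.2 1))
        rw [co_fwd hf, if_pos ⟨h, hy1⟩, co_app he, co_zero he hx1, zero_mul] at h4
        exact h4.symm
  obtain ⟨x, hx, h⟩ := main
  rw [← sc_eq he _ x hx, ARep.Hom.comp_apply, co_app hf]
  rcases h with h | h <;> rw [h] <;> ring

theorem sc_id (he : ValidPair n e) : sc (ARep.Hom.id (Iv k n ε e)) = 1 := by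
  unfold sc
  rw [ARep.Hom.id_apply, co_el_pos he ⟨he.1, le_refl _⟩]

theorem sc_of_id (he : ValidPair n e) (g : (Iv k n ε e).Hom (Iv k n ε e))
    (h : ∀ x v, g.app x v = v) : sc g = 1 := by
  unfold sc
  rw [h, co_el_pos he ⟨he.1, le_refl _⟩]

theorem sc_comp (he : ValidPair n e) (g h : (Iv k n ε e).Hom (Iv k n ε e)) :
    sc (g.comp h) = sc g * sc h := by
  conv_lhs => unfold sc
  rw [ARep.Hom.comp_apply, end_apply he g, map_smul, smul_eq_mul]
  rfl

theorem iv_not_zero (he : ValidPair n e) : ¬ (Iv k n ε e).IsZero := by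
  intro h
  have := co_el_pos (k := k) (ε := ε) he (x := e.2) ⟨he.1, le_refl _⟩ 1
  rw [h e.2 (el k n ε e e.2 1), map_zero] at this
  exact zero_ne_one this

theorem iv_indec (he : ValidPair n e) : (Iv k n ε e).Indec := by
  refine ⟨iv_not_zero he, ?_⟩
  rintro A B ⟨φ, hφ⟩
  -- the idempotent corresponding to `A`
  set q : (Iv k n ε e).Hom (Iv k n ε e) :=
    (φ.inv hφ).comp ((inlH A B).comp ((fstH A B).comp φ)) with hq
  by_cases h : sc q = 0
  · left
    intro x v
    have h1 := end_apply he q x ((φ.inv hφ).app x ((inlH A B).app x v))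
    rw [h, zero_smul, hq] at h1
    simp only [ARep.Hom.comp_apply, ARep.Hom.app_inv] at h1
    have h2 := congrArg (φ.app x) h1
    rw [ARep.Hom.app_inv, map_zero] at h2
    exact congrArg Prod.fst h2
  · right
    intro x v
    have h1 := end_apply he q x ((φ.inv hφ).app x ((inrH A B).app x v))
    rw [hq] at h1
    simp only [ARep.Hom.comp_apply, ARep.Hom.app_inv] at h1
    have h2 : (fstH A B).app x ((inrH A B).app x v) = 0 := rfl
    rw [h2, map_zero, map_zero, ← hq] at h1
    rcases smul_eq_zero.1 h1.symm with h3 | h3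
    · exact absurd h3 h
    · have h2 := congrArg (φ.app x) h3
      rw [ARep.Hom.app_inv, map_zero] at h2
      exact congrArg Prod.snd h2

end Interval

end CambrianA

namespace CambrianA

section Sums

/-- Direct sum of interval representations. -/
def Sm (k : Type) [Field k] (n : ℕ) (ε : ℕ → Bool) (L : List (ℕ × ℕ)) : ARep k n ε :=
  dsumList k n ε (L.map (Iv k n ε))

variable {k : Type} [Field k] {n : ℕ} {ε : ℕ → Bool} {e f : ℕ × ℕ}

theorem FRep_eq (T : Finset (ℕ × ℕ)) : FRep k n ε T = Sm k n ε T.toList := rfl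

theorem Sm_nil : (Sm k n ε []).IsZero := zeroRep_isZero

theorem Sm_cons (e : ℕ × ℕ) (L : List (ℕ × ℕ)) :
    Sm k n ε (e :: L) = (Iv k n ε e).dsum (Sm k n ε L) := rfl

theorem Sm_append (L L' : List (ℕ × ℕ)) :
    (Sm k n ε (L ++ L')).Iso ((Sm k n ε L).dsum (Sm k n ε L')) := by
  induction L with
  | nil => exact (dsum_zero_left Sm_nil).symm
  | cons e L ih =>
    exact (dsum_congr (ARep.Iso.refl _) ih).trans (dsum_assoc _ _ _).symm

theorem Sm_perm {L L' : List (ℕ × ℕ)} (h : L.Perm L') : (Sm k n ε L).Iso (Sm k n ε L') := by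
  induction h with
  | nil => exact ARep.Iso.refl _
  | cons x _ ih => exact dsum_congr (ARep.Iso.refl _) ih
  | swap x y L =>
    exact (dsum_assoc _ _ _).symm.trans ((dsum_congr (dsum_comm _ _) (ARep.Iso.refl _)).trans
      (dsum_assoc _ _ _))
  | trans _ _ h1 h2 => exact h1.trans h2

theorem isSummand_of_mem {L : List (ℕ × ℕ)} (h : e ∈ L) : (Iv k n ε e).IsSummand (Sm k n ε L) :=
  ⟨Sm k n ε (L.erase e), Sm_perm (List.perm_cons_erase h)⟩

theorem sc_cons (M N : ARep k n ε) (a : (Iv k n ε e).Hom (M.dsum N))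
    (b : (M.dsum N).Hom (Iv k n ε e)) :
    sc (b.comp a) = sc ((b.comp (inlH M N)).comp ((fstH M N).comp a)) +
      sc ((b.comp (inrH M N)).comp ((sndH M N).comp a)) := by
  unfold sc
  simp only [ARep.Hom.comp_apply]
  rw [← map_add, ← map_add]
  congr 2
  refine Prod.ext ?_ ?_
  · exact (add_zero _).symm
  · exact (zero_add _).symm

theorem sc_not_mem (he : ValidPair n e) (L : List (ℕ × ℕ)) (hL : ∀ f ∈ L, ValidPair n f)
    (h : e ∉ L) (a : (Iv k n ε e).Hom (Sm k n ε L)) (b : (Sm k n ε L).Hom (Iv k n ε e)) :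
    sc (b.comp a) = 0 := by
  induction L with
  | nil =>
    unfold sc
    rw [ARep.Hom.comp_apply, Sm_nil _ (a.app e.2 (el k n ε e e.2 1)), map_zero, map_zero]
  | cons f L ih =>
    rw [List.mem_cons, not_or] at h
    refine (sc_cons (Iv k n ε f) (Sm k n ε L) a b).trans ?_
    rw [key_zero he (hL f (List.mem_cons_self)) h.1,
      ih (fun f hf => hL f (List.mem_cons_of_mem _ hf)) h.2, add_zero]

theorem sc_rank_one (he : ValidPair n e) (L : List (ℕ × ℕ)) (hL : ∀ f ∈ L, ValidPair n f)
    (h : L.Nodup) : ∃ (α : (Iv k n ε e).Hom (Sm k n ε L) → k)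
      (β : (Sm k n ε L).Hom (Iv k n ε e) → k), ∀ a b, sc (b.comp a) = β b * α a := by
  induction L with
  | nil => exact ⟨fun _ => 0, fun _ => 0, fun a b => by
      rw [sc_not_mem he [] (by simp) (by simp)]; ring⟩
  | cons f L ih =>
    rw [List.nodup_cons] at h
    have hL' : ∀ f ∈ L, ValidPair n f := fun f hf => hL f (List.mem_cons_of_mem _ hf)
    by_cases hef : e = f
    · subst hef
      refine ⟨fun a => sc ((fstH (Iv k n ε e) (Sm k n ε L)).comp a),
        fun b => sc (ARep.Hom.comp b (inlH (Iv k n ε e) (Sm k n ε L))), fun a b => ?_⟩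
      refine (sc_cons (Iv k n ε e) (Sm k n ε L) a b).trans ?_
      rw [sc_not_mem he L hL' h.1, add_zero, sc_comp he]
      rfl
    · obtain ⟨α, β, hαβ⟩ := ih hL' h.2
      refine ⟨fun a => α ((sndH (Iv k n ε f) (Sm k n ε L)).comp a),
        fun b => β (ARep.Hom.comp b (inrH (Iv k n ε f) (Sm k n ε L))), fun a b => ?_⟩
      refine (sc_cons (Iv k n ε f) (Sm k n ε L) a b).trans ?_
      rw [key_zero he (hL f (List.mem_cons_self)) hef, hαβ, zero_add]
      rfl

theorem mem_of_isSummand (he : ValidPair n e) {L : List (ℕ × ℕ)} (hL : ∀ f ∈ L, ValidPair n f)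
    (h : (Iv k n ε e).IsSummand (Sm k n ε L)) : e ∈ L := by
  by_contra hn
  obtain ⟨a, b, hab⟩ := isSummand_iff.1 h
  have h1 := sc_not_mem he L hL hn a b
  rw [sc_of_id he _ hab] at h1
  exact one_ne_zero h1

theorem nodup_no_double (he : ValidPair n e) {L : List (ℕ × ℕ)} (hL : ∀ f ∈ L, ValidPair n f)
    (h : L.Nodup) : ¬ ((Iv k n ε e).dsum (Iv k n ε e)).IsSummand (Sm k n ε L) := by
  intro hs
  obtain ⟨a, b, hab⟩ := isSummand_iff.1 hs
  obtain ⟨α, β, hαβ⟩ := sc_rank_one (k := k) (ε := ε) he L hL h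
  have h11 : sc (((fstH (Iv k n ε e) (Iv k n ε e)).comp b).comp (a.comp (inlH (Iv k n ε e) (Iv k n ε e)))) = 1 :=
    sc_of_id he _ fun x v => by
      simp only [ARep.Hom.comp_apply]; rw [hab]; rfl
  have h22 : sc (((sndH (Iv k n ε e) (Iv k n ε e)).comp b).comp (a.comp (inrH (Iv k n ε e) (Iv k n ε e)))) = 1 :=
    sc_of_id he _ fun x v => by
      simp only [ARep.Hom.comp_apply]; rw [hab]; rfl
  have h12 : sc (((fstH (Iv k n ε e) (Iv k n ε e)).comp b).comp (a.comp (inrH (Iv k n ε e) (Iv k n ε e)))) = 0 := by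
    unfold sc
    simp only [ARep.Hom.comp_apply]
    rw [hab]
    exact map_zero _
  rw [hαβ] at h11 h22 h12
  rcases mul_eq_zero.1 h12 with h0 | h0
  · rw [h0, zero_mul] at h11; exact zero_ne_one h11
  · rw [h0, mul_zero] at h22; exact zero_ne_one h22

theorem nodup_of_basic {L : List (ℕ × ℕ)} (hL : ∀ f ∈ L, ValidPair n f)
    (h : (Sm k n ε L).Basic) : L.Nodup := by
  rw [List.nodup_iff_count_le_one]
  intro e
  by_contra hc
  have hc : 2 ≤ L.count e := by omega
  have he : e ∈ L := List.count_pos_iff.1 (by omega)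
  have he' : e ∈ L.erase e := List.count_pos_iff.1 (by rw [List.count_erase_self]; omega)
  refine h _ (iv_indec (hL e he)) ⟨Sm k n ε ((L.erase e).erase e), ?_⟩
  have hp : L.Perm (e :: e :: ((L.erase e).erase e)) :=
    (List.perm_cons_erase he).trans (List.Perm.cons _ (List.perm_cons_erase he'))
  exact (Sm_perm hp).trans (dsum_assoc _ _ _).symm

end Sums

end CambrianA

namespace CambrianA

section Decomp

variable {k : Type} [Field k] {n : ℕ} {ε : ℕ → Bool} {e f : ℕ × ℕ}

/-- Families of vectors compatible with the structure maps on `[s, j]`. -/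
def Ch (M : ARep k n ε) (s j : ℕ) : Submodule k (∀ x, M.V x) where
  carrier := {v | ∀ x, s ≤ x → x < j → (ε x = true → M.fwd x (v x) = v (x+1)) ∧
    (ε x = false → M.bwd x (v (x+1)) = v x)}
  add_mem' := by
    intro a b ha hb x h1 h2
    refine ⟨fun h => ?_, fun h => ?_⟩
    · simp only [Pi.add_apply, map_add, (ha x h1 h2).1 h, (hb x h1 h2).1 h]
    · simp only [Pi.add_apply, map_add, (ha x h1 h2).2 h, (hb x h1 h2).2 h]
  zero_mem' := by
    intro x h1 h2
    simp
  smul_mem' := by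
    intro c a ha x h1 h2
    refine ⟨fun h => ?_, fun h => ?_⟩
    · simp only [Pi.smul_apply, map_smul, (ha x h1 h2).1 h]
    · simp only [Pi.smul_apply, map_smul, (ha x h1 h2).2 h]

theorem mem_Ch {M : ARep k n ε} {s j : ℕ} {v : ∀ x, M.V x} : v ∈ Ch M s j ↔
    ∀ x, s ≤ x → x < j → (ε x = true → M.fwd x (v x) = v (x+1)) ∧
    (ε x = false → M.bwd x (v (x+1)) = v x) := Iff.rfl

theorem Ch_mono {M : ARep k n ε} {s j : ℕ} {v : ∀ x, M.V x} (h : v ∈ Ch M s (j+1)) :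
    v ∈ Ch M s j := fun x h1 h2 => h x h1 (by omega)

theorem Ch_update {M : ARep k n ε} {s j : ℕ} {v : ∀ x, M.V x} (h : v ∈ Ch M s j)
    (w : M.V (j+1)) (h1 : ε j = true → M.fwd j (v j) = w) (h2 : ε j = false → M.bwd j w = v j) :
    Function.update v (j+1) w ∈ Ch M s (j+1) := by
  intro x hx hx'
  have e1 : Function.update v (j+1) w x = v x := Function.update_of_ne (by omega) _ _
  rcases Nat.lt_succ_iff_lt_or_eq.1 hx' with hlt | rfl
  · have e2 : Function.update v (j+1) w (x+1) = v (x+1) := Function.update_of_ne (by omega) _ _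
    rw [e1, e2]
    exact h x hx hlt
  · rw [e1, Function.update_self]
    exact ⟨h1, h2⟩

/-- Extension of functionals. -/
theorem exists_functional {X Y : Type*} [AddCommGroup X] [Module k X] [AddCommGroup Y]
    [Module k Y] (A : X →ₗ[k] Y) (θ : X →ₗ[k] k) (h : ∀ x, A x = 0 → θ x = 0) :
    ∃ ψ : Y →ₗ[k] k, ∀ x, ψ (A x) = θ x := by
  have h1 : θ ∈ (LinearMap.ker A).dualAnnihilator := by
    rw [Submodule.mem_dualAnnihilator]
    intro x hx
    exact h x hx
  rw [← LinearMap.range_dualMap_eq_dualAnnihilator_ker] at h1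
  obtain ⟨ψ, hψ⟩ := h1
  exact ⟨ψ, fun x => by rw [← hψ]; rfl⟩

/-- The evaluation of families at a vertex. -/
def evC (M : ARep k n ε) (s j x : ℕ) : Ch M s j →ₗ[k] M.V x :=
  (LinearMap.proj x).comp (Ch M s j).subtype

theorem evC_apply (M : ARep k n ε) (s j x : ℕ) (c : Ch M s j) : evC M s j x c = c.1 x := rfl

theorem dual_chain (M : ARep k n ε) (s : ℕ) (φ : M.V s →ₗ[k] k) (d : ℕ) (ψ : M.V (s+d) →ₗ[k] k)
    (hψ : ∀ c ∈ Ch M s (s+d), ψ (c (s+d)) = φ (c s)) :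
    ∃ θ : ∀ y, M.V y →ₗ[k] k, θ s = φ ∧ θ (s+d) = ψ ∧
      ∀ y, s ≤ y → y < s+d → (ε y = true → ∀ m, θ (y+1) (M.fwd y m) = θ y m) ∧
        (ε y = false → ∀ m, θ y (M.bwd y m) = θ (y+1) m) := by
  induction d with
  | zero =>
    have h0 : ψ = φ := by
      apply LinearMap.ext
      intro u
      have := hψ (Function.update 0 s u) (by intro x h1 h2; omega)
      have e3 : Function.update (0 : ∀ x, M.V x) s u s = u := Function.update_self ..
      exact (congrArg ψ e3).symm.trans (this.trans (congrArg φ e3))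
    refine ⟨Function.update 0 s φ, Function.update_self .., ?_, fun y h1 h2 => by omega⟩
    rw [h0]
    exact Function.update_self ..
  | succ d ih =>
    obtain ⟨ψ', h1, h2, h3⟩ : ∃ ψ' : M.V (s+d) →ₗ[k] k,
        (∀ c ∈ Ch M s (s+d), ψ' (c (s+d)) = φ (c s)) ∧
        (ε (s+d) = true → ∀ m, ψ (M.fwd (s+d) m) = ψ' m) ∧
        (ε (s+d) = false → ∀ m, ψ' (M.bwd (s+d) m) = ψ m) := by
      cases h : ε (s+d)
      · obtain ⟨ψ', hψ'⟩ := exists_functional (k := k)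
          ((M.bwd (s+d)).coprod (evC M s (s+d) (s+d))) (ψ.coprod (φ.comp (evC M s (s+d) s))) (by
            rintro ⟨y, c⟩ hyc
            simp only [LinearMap.coprod_apply, evC_apply, LinearMap.comp_apply] at hyc ⊢
            have h1 := hψ _ (Ch_update (M := M) c.2 (-y) (by simp [h]) (fun _ => by
              rw [map_neg]; exact (eq_neg_of_add_eq_zero_right hyc).symm))
            have e1 : Function.update c.1 (s+d+1) (-y) s = c.1 s :=
              Function.update_of_ne (by omega) _ _
            have e2 : Function.update c.1 (s+d+1) (-y) (s+d+1) = -y := Function.update_self ..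
            rw [e1] at h1
            rw [← h1]
            refine (congrArg (fun t => ψ y + ψ t) e2).trans ?_
            simp)
        refine ⟨ψ', ?_, by simp, ?_⟩
        · intro c hc
          have := hψ' (0, ⟨c, hc⟩)
          simpa [evC_apply] using this
        · intro _ m
          have := hψ' (m, 0)
          simpa using this
      · refine ⟨ψ.comp (M.fwd (s+d)), ?_, fun _ m => rfl, by simp⟩
        intro c hc
        have h1 := hψ _ (Ch_update (M := M) hc (M.fwd (s+d) (c (s+d))) (fun _ => rfl)
          (by simp [h]))
        have e1 : Function.update c (s+d+1) (M.fwd (s+d) (c (s+d))) s = c s :=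
          Function.update_of_ne (by omega) _ _
        have e2 : Function.update c (s+d+1) (M.fwd (s+d) (c (s+d))) (s+d+1)
          = M.fwd (s+d) (c (s+d)) := Function.update_self ..
        rw [e1] at h1
        rw [← h1]
        exact (congrArg ψ e2).symm
    obtain ⟨θ, hs, hd, hθ⟩ := ih ψ' h1
    refine ⟨Function.update θ (s+d+1) ψ, ?_, Function.update_self .., ?_⟩
    · rw [Function.update_of_ne (by omega)]; exact hs
    · intro y hy hy'
      have e1 : Function.update θ (s+d+1) ψ y = θ y := Function.update_of_ne (by omega) _ _
      rcases (by omega : y < s+d ∨ y = s+d) with hlt | rfl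
      · have e2 : Function.update θ (s+d+1) ψ (y+1) = θ (y+1) :=
          Function.update_of_ne (by omega) _ _
        rw [e1, e2]
        exact hθ y hy hlt
      · rw [e1, Function.update_self, hd]
        exact ⟨h2, h3⟩

theorem exists_interval_summand (M : ARep k n ε) (hM : ¬ M.IsZero) :
    ∃ e, ValidPair n e ∧ (Iv k n ε e).IsSummand M := by
  have hM' : ∃ s, ∃ v : M.V s, v ≠ 0 := by
    simpa [ARep.IsZero] using hM
  obtain ⟨s, ⟨u, hu⟩, hmin⟩ : ∃ s, (∃ v : M.V s, v ≠ 0) ∧ ∀ y < s, ∀ v : M.V y, v = 0 := by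
    refine ⟨Nat.find hM', Nat.find_spec hM', fun y hy v => ?_⟩
    have := Nat.find_min hM' hy
    by_contra h
    exact this ⟨v, h⟩
  have hs1 : 1 ≤ s ∧ s ≤ n + 2 := by
    by_contra h
    exact hu (M.triv s (by omega) u)
  let P : ℕ → Prop := fun j => ∀ v ∈ Ch M s j, ∃ v' ∈ Ch M s j, v' s = v s ∧ v' j = 0
  have hP : ∃ m, s ≤ m ∧ P m := ⟨n+3, by omega, fun v hv => ⟨v, hv, rfl, M.triv _ (by omega) _⟩⟩
  have hPs : ¬ P s := by
    intro h
    obtain ⟨v', _, h1, h2⟩ := h (Function.update 0 s u) (by intro x h1 h2; omega)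
    rw [Function.update_self] at h1
    exact hu (h1.symm.trans h2)
  obtain ⟨j, hsj, hjn, hj, hj1⟩ : ∃ j, s ≤ j ∧ j ≤ n + 2 ∧ ¬ P j ∧ P (j+1) := by
    have h1 := Nat.find_spec hP
    have h2 : Nat.find hP ≤ n + 3 :=
      Nat.find_min' hP ⟨by omega, fun v hv => ⟨v, hv, rfl, M.triv _ (by omega) _⟩⟩
    obtain ⟨m, hm⟩ : ∃ m, Nat.find hP = m := ⟨_, rfl⟩
    rw [hm] at h1 h2
    have h3 : s ≠ m := by
      intro h; subst h; exact hPs h1.2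
    refine ⟨m-1, by omega, by omega, ?_, ?_⟩
    · have h4 := Nat.find_min hP (m := m-1) (by omega)
      intro h; exact h4 ⟨by omega, h⟩
    · have : m - 1 + 1 = m := by omega
      rw [this]; exact h1.2
  have hj' : ∃ v ∈ Ch M s j, ∀ v' ∈ Ch M s j, v' s = v s → v' j ≠ 0 := by
    by_contra h
    apply hj
    intro v hv
    by_contra h'
    exact h ⟨v, hv, fun v' hv' h1 h2 => h' ⟨v', hv', h1, h2⟩⟩
  obtain ⟨v, hv, hvK⟩ := hj'
  obtain ⟨w, hw, hws, hwj⟩ : ∃ w ∈ Ch M s j, w s = v s ∧ (ε j = true → M.fwd j (w j) = 0) := by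
    cases h : ε j
    · exact ⟨v, hv, rfl, by simp⟩
    · obtain ⟨v2, h1, h2, h3⟩ := hj1 _ (Ch_update hv (M.fwd j (v j)) (fun _ => rfl) (by simp [h]))
      refine ⟨v2, Ch_mono h1, ?_, fun _ => ?_⟩
      · rw [h2, Function.update_of_ne (by omega)]
      · rw [(h1 j hsj (by omega)).1 h, h3]
  -- the functional at `s`
  let K : Submodule k (M.V s) := (LinearMap.ker (evC M s j j)).map (evC M s j s)
  have hvK' : v s ∉ K := by
    rintro ⟨c, hc, hc'⟩
    exact hvK c.1 c.2 hc' hc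
  obtain ⟨φ, hφ1, hφ2⟩ : ∃ φ : M.V s →ₗ[k] k, φ (v s) = 1 ∧ ∀ u ∈ K, φ u = 0 := by
    obtain ⟨g, hg1, hg2⟩ := Submodule.exists_le_ker_of_notMem hvK'
    refine ⟨(g (v s))⁻¹ • g, ?_, fun u hu => ?_⟩
    · simp [hg1]
    · have : g u = 0 := hg2 hu
      simp [this]
  obtain ⟨ψ, hψ⟩ := exists_functional (k := k)
    ((M.bwd j).coprod (evC M s j j)) ((0 : M.V (j+1) →ₗ[k] k).coprod (φ.comp (evC M s j s))) (by
      rintro ⟨y, c⟩ hyc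
      simp only [LinearMap.coprod_apply, evC_apply, LinearMap.comp_apply] at hyc ⊢
      rw [LinearMap.zero_apply, zero_add]
      apply hφ2
      cases h : ε j
      · obtain ⟨c2, h1, h2, h3⟩ := hj1 _ (Ch_update (M := M) c.2 (-y) (by simp [h]) (fun _ => by
              rw [map_neg]; exact (eq_neg_of_add_eq_zero_right hyc).symm))
        rw [Function.update_of_ne (by omega)] at h2
        refine ⟨⟨c2, Ch_mono h1⟩, ?_, h2⟩
        have := (h1 j hsj (by omega)).2 h
        rw [h3, map_zero] at this
        exact this.symm
      · rw [M.bwd_zero j h, LinearMap.zero_apply, zero_add] at hyc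
        exact ⟨c, hyc, rfl⟩)
  obtain ⟨d, rfl⟩ : ∃ d, j = s + d := ⟨j - s, by omega⟩
  obtain ⟨θ, hθs, hθj, hθ⟩ := dual_chain M s φ d ψ (by
    intro c hc
    have := hψ (0, ⟨c, hc⟩)
    simpa [evC_apply] using this)
  have hθb : ∀ m, θ (s+d) (M.bwd (s+d) m) = 0 := by
    intro m
    have := hψ (m, 0)
    rw [hθj]
    simpa using this
  have hθw : ∀ i, i ≤ d → θ (s+i) (w (s+i)) = 1 := by
    intro i
    induction i with
    | zero =>
      intro _
      rw [Nat.add_zero, hθs, hws, hφ1]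
    | succ i ih =>
      intro hi
      have ih := ih (by omega)
      have a1 := hθ (s+i) (by omega) (by omega)
      have a2 := hw (s+i) (by omega) (by omega)
      change θ (s+i+1) (w (s+i+1)) = 1
      cases h : ε (s+i)
      · rw [← a1.2 h, a2.2 h, ih]
      · rw [← a2.1 h, a1.1 h, ih]
  have he : ValidPair n (s-1, s+d) := ⟨by simp only; omega, by simp only; omega⟩
  refine ⟨(s-1, s+d), he, ?_⟩
  rw [isSummand_iff]
  have hSp : ∀ x, Sp (s-1, s+d) x ↔ s ≤ x ∧ x ≤ s+d := by
    intro x; unfold Sp; simp only; omega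
  refine ⟨homFrom he w ?_ ?_, homTo he θ ?_ ?_, ?_⟩
  · intro i hi hsp
    rw [hSp] at hsp
    split_ifs with h
    · rw [hSp] at h
      exact (hw i (by omega) (by omega)).1 hi
    · rw [hSp] at h
      have : i = s+d := by omega
      subst this
      exact hwj hi
  · intro i hi hsp
    rw [hSp] at hsp
    split_ifs with h
    · rw [hSp] at h
      exact (hw i (by omega) (by omega)).2 hi
    · rw [hSp] at h
      exact hmin i (by omega) _
  · intro i hi hsp m
    rw [hSp] at hsp
    split_ifs with h
    · rw [hSp] at h
      exact (hθ i (by omega) (by omega)).1 hi m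
    · rw [hSp] at h
      rw [hmin i (by omega) m, map_zero, map_zero]
  · intro i hi hsp m
    rw [hSp] at hsp
    split_ifs with h
    · rw [hSp] at h
      exact (hθ i (by omega) (by omega)).2 hi m
    · rw [hSp] at h
      have : i = s+d := by omega
      subst this
      exact hθb m
  · intro x c
    apply co_inj
    rw [co_homTo, homFrom_app, map_smul, smul_eq_mul]
    split_ifs with h
    · rw [hSp] at h
      obtain ⟨i, rfl⟩ : ∃ i, x = s + i := ⟨x - s, by omega⟩
      rw [hθw i (by omega), mul_one]
    · rw [co_zero he h]

/-- Total dimension. -/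
def tdim (M : ARep k n ε) : ℕ := ∑ x ∈ Finset.range (n+3), Module.finrank k (M.V x)

theorem tdim_iso {M N : ARep k n ε} (h : M.Iso N) : tdim M = tdim N := by
  obtain ⟨f, hf⟩ := h
  exact Finset.sum_congr rfl fun x _ => (LinearEquiv.ofBijective (f.app x) (hf x)).finrank_eq

theorem tdim_dsum (M N : ARep k n ε) : tdim (M.dsum N) = tdim M + tdim N := by
  unfold tdim
  rw [← Finset.sum_add_distrib]
  exact Finset.sum_congr rfl fun x _ => Module.finrank_prod

theorem tdim_iv (he : ValidPair n e) : 0 < tdim (Iv k n ε e) := by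
  have h1 : 0 < Module.finrank k ((Iv k n ε e).V e.2) := by
    rw [Module.finrank_pos_iff_exists_ne_zero]
    refine ⟨el k n ε e e.2 1, fun h => ?_⟩
    have := co_el_pos (k := k) (ε := ε) he (x := e.2) ⟨he.1, le_refl _⟩ 1
    rw [h, map_zero] at this
    exact zero_ne_one this
  have h2 := he.2
  exact lt_of_lt_of_le h1 (Finset.single_le_sum
    (f := fun x => Module.finrank k ((Iv k n ε e).V x)) (fun _ _ => Nat.zero_le _)
    (Finset.mem_range.2 (by omega)))

theorem decomp (M : ARep k n ε) :
    ∃ L : List (ℕ × ℕ), (∀ e ∈ L, ValidPair n e) ∧ M.Iso (Sm k n ε L) := by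
  obtain ⟨d, hd⟩ : ∃ d, tdim M = d := ⟨_, rfl⟩
  induction d using Nat.strong_induction_on generalizing M with
  | _ d ih =>
    by_cases hM : M.IsZero
    · exact ⟨[], by simp, zero_iso hM Sm_nil⟩
    · obtain ⟨e, he, N, hN⟩ := exists_interval_summand M hM
      have h1 := tdim_iso hN
      rw [tdim_dsum] at h1
      have h2 := tdim_iv (k := k) (ε := ε) he
      obtain ⟨L, hL, hNL⟩ := ih (tdim N) (by omega) N rfl
      refine ⟨e :: L, ?_, hN.trans (dsum_congr (ARep.Iso.refl _) hNL)⟩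
      simp only [List.mem_cons]
      rintro f (rfl | hf)
      · exact he
      · exact hL f hf

theorem indec_iso_iv {A : ARep k n ε} (hA : A.Indec) : ∃ e, ValidPair n e ∧ A.Iso (Iv k n ε e) := by
  obtain ⟨e, he, N, hN⟩ := exists_interval_summand A hA.1
  refine ⟨e, he, ?_⟩
  rcases hA.2 _ _ hN with h | h
  · exact absurd h (iv_not_zero he)
  · exact (hN.trans (dsum_comm _ _)).trans (dsum_zero_left h)

/-- Almost rigidity of a sum of intervals. -/
theorem almostRigid_Sm_iff {L : List (ℕ × ℕ)} (hL : ∀ e ∈ L, ValidPair n e) :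
    AlmostRigid (Sm k n ε L) ↔
      L.Nodup ∧ ∀ e ∈ L, ∀ f ∈ L, GoodPair (Iv k n ε e) (Iv k n ε f) := by
  constructor
  · rintro ⟨h1, h2⟩
    exact ⟨nodup_of_basic hL h1, fun e he f hf => h2 _ _ (iv_indec (hL e he))
      (iv_indec (hL f hf)) (isSummand_of_mem he) (isSummand_of_mem hf)⟩
  · rintro ⟨h1, h2⟩
    refine ⟨fun A hA hs => ?_, fun A B hA hB hAs hBs => ?_⟩
    · obtain ⟨e, he, hAe⟩ := indec_iso_iv hA
      exact nodup_no_double he hL h1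
        (isSummand_trans (isSummand_of_iso (dsum_congr hAe hAe).symm) hs)
    · obtain ⟨e, he, hAe⟩ := indec_iso_iv hA
      obtain ⟨f, hf, hBf⟩ := indec_iso_iv hB
      have h3 := mem_of_isSummand he hL (isSummand_trans (isSummand_of_iso hAe.symm) hAs)
      have h4 := mem_of_isSummand hf hL (isSummand_trans (isSummand_of_iso hBf.symm) hBs)
      exact (h2 e h3 f h4).of_iso hAe.symm hBf.symm

end Decomp

end CambrianA

namespace CambrianA

section ExtCalc

variable {k : Type} [Field k] {n : ℕ} {ε : ℕ → Bool} {e f : ℕ × ℕ}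

/-- The arrow between `i` and `i+1` starts in the support of `e` and ends in that of `f`. -/
def Rl (ε : ℕ → Bool) (e f : ℕ × ℕ) (i : ℕ) : Prop :=
  (ε i = true ∧ Sp e i ∧ Sp f (i+1)) ∨ (ε i = false ∧ Sp e (i+1) ∧ Sp f i)

/-- The image of the basis vector of the sub of an extension. -/
def io (τ : SES (Iv k n ε f) (Iv k n ε e)) (x : ℕ) : τ.E.V x := τ.ι.app x (el k n ε f x 1)

theorem el_not (he : ValidPair n e) {x : ℕ} (hx : ¬ Sp e x) (c : k) : el k n ε e x c = 0 := by
  apply co_inj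
  rw [co_el he, if_neg hx, map_zero]

theorem io_not (hf : ValidPair n f) (τ : SES (Iv k n ε f) (Iv k n ε e)) {x : ℕ} (hx : ¬ Sp f x) :
    io τ x = 0 := by
  unfold io
  rw [el_not hf hx, map_zero]

theorem io_fwd (hf : ValidPair n f) (τ : SES (Iv k n ε f) (Iv k n ε e)) (i : ℕ)
    (h : ε i = true) (hi : Sp f i) : τ.E.fwd i (io τ i) = io τ (i+1) := by
  unfold io
  rw [← τ.ι.comm_fwd]
  congr 1
  apply co_inj
  rw [co_fwd hf, co_el hf, co_el hf, if_pos hi]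
  simp [h]

theorem io_bwd (hf : ValidPair n f) (τ : SES (Iv k n ε f) (Iv k n ε e)) (i : ℕ)
    (h : ε i = false) (hi : Sp f (i+1)) : τ.E.bwd i (io τ (i+1)) = io τ i := by
  unfold io
  rw [← τ.ι.comm_bwd]
  congr 1
  apply co_inj
  rw [co_bwd hf, co_el hf, co_el hf, if_pos hi]
  simp [h]

theorem pi_io (τ : SES (Iv k n ε f) (Iv k n ε e)) (x : ℕ) : τ.π.app x (io τ x) = 0 :=
  (τ.exct x _).2 ⟨_, rfl⟩

theorem exists_io (hf : ValidPair n f) (τ : SES (Iv k n ε f) (Iv k n ε e)) (x : ℕ) (v : τ.E.V x)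
    (hv : τ.π.app x v = 0) : ∃ c : k, v = c • io τ x := by
  obtain ⟨u, hu⟩ := (τ.exct x v).1 hv
  refine ⟨co k n ε f x u, ?_⟩
  unfold io
  rw [← map_smul, ← el_eq_smul, el_co hf, hu]

/-- Lifts of basis vectors, together with the obstruction scalars. -/
structure LiftData (τ : SES (Iv k n ε f) (Iv k n ε e)) where
  w : ∀ x, τ.E.V x
  o : ℕ → k
  w_not : ∀ x, ¬ Sp e x → w x = 0
  pi_w : ∀ x, τ.π.app x (w x) = el k n ε e x 1
  w_fwd : ∀ i, ε i = true → Sp e i → τ.E.fwd i (w i) = w (i+1) + o i • io τ (i+1)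
  w_bwd : ∀ i, ε i = false → Sp e (i+1) → τ.E.bwd i (w (i+1)) = w i + o i • io τ i

theorem exists_liftData (he : ValidPair n e) (hf : ValidPair n f)
    (τ : SES (Iv k n ε f) (Iv k n ε e)) : Nonempty (LiftData τ) := by
  have h1 : ∀ x, ∃ w : τ.E.V x, (¬ Sp e x → w = 0) ∧ τ.π.app x w = el k n ε e x 1 := by
    intro x
    by_cases hx : Sp e x
    · obtain ⟨w, hw⟩ := τ.surj x (el k n ε e x 1)
      exact ⟨w, fun h => absurd hx h, hw⟩
    · exact ⟨0, fun _ => rfl, by rw [map_zero, el_not he hx]⟩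
  choose w hw hpw using h1
  have h2 : ∀ i, ∃ o : k,
      (ε i = true → Sp e i → τ.E.fwd i (w i) = w (i+1) + o • io τ (i+1)) ∧
      (ε i = false → Sp e (i+1) → τ.E.bwd i (w (i+1)) = w i + o • io τ i) := by
    intro i
    cases h : ε i
    · by_cases hi : Sp e (i+1)
      · obtain ⟨c, hc⟩ := exists_io hf τ i (τ.E.bwd i (w (i+1)) - w i) (by
          rw [map_sub, τ.π.comm_bwd, hpw, hpw, sub_eq_zero]
          apply co_inj
          rw [co_bwd he, co_el he, co_el he, if_pos hi]
          simp [h])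
        exact ⟨c, by simp, fun _ _ => by rw [← hc]; abel⟩
      · exact ⟨0, by simp, fun _ h => absurd h hi⟩
    · by_cases hi : Sp e i
      · obtain ⟨c, hc⟩ := exists_io hf τ (i+1) (τ.E.fwd i (w i) - w (i+1)) (by
          rw [map_sub, τ.π.comm_fwd, hpw, hpw, sub_eq_zero]
          apply co_inj
          rw [co_fwd he, co_el he, co_el he, if_pos hi]
          simp [h])
        exact ⟨c, fun _ _ => by rw [← hc]; abel, by simp⟩
      · exact ⟨0, fun _ h => absurd h hi, by simp⟩
  choose o ho1 ho2 using h2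
  exact ⟨⟨w, o, hw, hpw, ho1, ho2⟩⟩

theorem LiftData.splits (he : ValidPair n e) (hf : ValidPair n f)
    {τ : SES (Iv k n ε f) (Iv k n ε e)} (D : LiftData τ) (B : ℕ → k)
    (hB : ∀ x, ¬ (Sp e x ∧ Sp f x) → B x = 0)
    (h1 : ∀ i, ε i = true → Sp e i → Sp f (i+1) → B (i+1) = B i + D.o i)
    (h2 : ∀ i, ε i = false → Sp e (i+1) → Sp f i → B i = B (i+1) + D.o i) : τ.Splits := by
  refine τ.splits_of_section (homFrom he (fun x => D.w x + B x • io τ x) ?_ ?_) ?_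
  · intro i h hi
    have e1 : (if Sp e (i+1) then D.w (i+1) + B (i+1) • io τ (i+1) else 0) =
        D.w (i+1) + B (i+1) • io τ (i+1) := by
      split_ifs with h3
      · rfl
      · rw [D.w_not _ h3, hB _ (fun h => h3 h.1), zero_smul, add_zero]
    rw [e1, map_add, map_smul, D.w_fwd i h hi, add_assoc]
    congr 1
    have e2 : B i • τ.E.fwd i (io τ i) = B i • io τ (i+1) := by
      by_cases h4 : Sp f i
      · rw [io_fwd hf τ i h h4]
      · rw [hB i (fun h => h4 h.2), zero_smul, zero_smul]
    rw [e2, ← add_smul]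
    by_cases h5 : Sp f (i+1)
    · rw [h1 i h hi h5, add_comm (B i)]
    · rw [io_not hf τ h5, smul_zero, smul_zero]
  · intro i h hi
    have e1 : (if Sp e i then D.w i + B i • io τ i else 0) = D.w i + B i • io τ i := by
      split_ifs with h3
      · rfl
      · rw [D.w_not _ h3, hB _ (fun h => h3 h.1), zero_smul, add_zero]
    rw [e1, map_add, map_smul, D.w_bwd i h hi, add_assoc]
    congr 1
    have e2 : B (i+1) • τ.E.bwd i (io τ (i+1)) = B (i+1) • io τ i := by
      by_cases h4 : Sp f (i+1)
      · rw [io_bwd hf τ i h h4]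
      · rw [hB (i+1) (fun h => h4 h.2), zero_smul, zero_smul]
    rw [e2, ← add_smul]
    by_cases h5 : Sp f i
    · rw [h2 i h hi h5, add_comm (B (i+1))]
    · rw [io_not hf τ h5, smul_zero, smul_zero]
  · intro x v
    rw [homFrom_app, map_smul, map_add, map_smul, pi_io, smul_zero, add_zero, D.pi_w,
      ← el_eq_smul, el_co he]

theorem Rl_bounds {i : ℕ} (h : Rl ε e f i) : max e.1 f.1 ≤ i ∧ i ≤ min e.2 f.2 := by
  unfold Rl Sp at h
  omega

/-- Solving the cocycle equation when one of the two dangling arrows is irrelevant. -/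
theorem LiftData.splits' (he : ValidPair n e) (hf : ValidPair n f)
    {τ : SES (Iv k n ε f) (Iv k n ε e)} (D : LiftData τ)
    (h : ¬ Rl ε e f (max e.1 f.1) ∨ ¬ Rl ε e f (min e.2 f.2))
    (hlr : max e.1 f.1 < min e.2 f.2) : τ.Splits := by
  set l := max e.1 f.1 with hl
  set r := min e.2 f.2 with hr
  set o' : ℕ → k := fun i => if ε i = true then D.o i else - D.o i with ho'
  have hSp : ∀ x, (Sp e x ∧ Sp f x) ↔ (l < x ∧ x ≤ r) := by
    intro x; unfold Sp; omega
  obtain ⟨B, hB, hB'⟩ : ∃ B : ℕ → k, (∀ x, ¬ (l < x ∧ x ≤ r) → B x = 0) ∧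
      ∀ i, Rl ε e f i → B (i+1) = B i + o' i := by
    rcases h with h | h
    · refine ⟨fun x => if l < x ∧ x ≤ r then - ∑ y ∈ Finset.Ico x (r+1), o' y else 0,
        fun x hx => if_neg hx, ?_⟩
      intro i hi
      have hb := Rl_bounds hi
      have hil : i ≠ l := fun h0 => h (h0 ▸ hi)
      simp only
      rw [if_pos (by omega : l < i ∧ i ≤ r),
        Finset.sum_eq_sum_Ico_succ_bot (show i < r + 1 by omega)]
      split_ifs with h3
      · ring
      · have : i = r := by omega
        subst this
        simp
    · refine ⟨fun x => if l < x ∧ x ≤ r then ∑ y ∈ Finset.Ico l x, o' y else 0,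
        fun x hx => if_neg hx, ?_⟩
      intro i hi
      have hb := Rl_bounds hi
      have hir : i ≠ r := fun h0 => h (h0 ▸ hi)
      simp only
      rw [if_pos (by omega : l < i + 1 ∧ i + 1 ≤ r), Finset.sum_Ico_succ_top (by omega)]
      split_ifs with h3
      · ring
      · have : i = l := by omega
        subst this
        simp
  refine D.splits he hf B (fun x hx => hB x (by rw [← hSp]; exact hx)) ?_ ?_
  · intro i h1 h2 h3
    have := hB' i (Or.inl ⟨h1, h2, h3⟩)
    simpa [ho', h1] using this
  · intro i h1 h2 h3
    have := hB' i (Or.inr ⟨h1, h2, h3⟩)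
    rw [this]
    simp [ho', h1]

/-- The one-dimensional case. -/
theorem extOne (he : ValidPair n e) (hf : ValidPair n f) {g : ℕ × ℕ} (hg : ValidPair n g) (j : ℕ)
    (hfg : f ≠ g) (hgS : ∀ x, Sp g x ↔ Sp e x ∨ Sp f x) (hd : ∀ x, Sp e x → ¬ Sp f x)
    (hR : ∀ i, Rl ε e f i → i = j) (hN : ∀ i, ¬ Rl ε f e i) :
    ExtOneDimIndecMid (Iv k n ε e) (Iv k n ε f) := by
  set ι : (Iv k n ε f).Hom (Iv k n ε g) := can k hf hg
    (by
      intro i h1 h2 h3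
      refine ⟨fun _ => (hgS i).2 (Or.inr h2), fun _ => ?_⟩
      exact ((hgS _).1 h3).resolve_left fun h => hN i (Or.inl ⟨h1, h2, h⟩))
    (by
      intro i h1 h2 h3
      refine ⟨fun _ => (hgS _).2 (Or.inr h2), fun _ => ?_⟩
      exact ((hgS _).1 h3).resolve_left fun h => hN i (Or.inr ⟨h1, h2, h⟩)) with hι
  set π : (Iv k n ε g).Hom (Iv k n ε e) := can k hg he
    (by
      intro i h1 h2 h3
      refine ⟨fun _ => ?_, fun _ => (hgS _).2 (Or.inl h3)⟩
      exact ((hgS _).1 h2).resolve_right fun h => hN i (Or.inl ⟨h1, h, h3⟩))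
    (by
      intro i h1 h2 h3
      refine ⟨fun _ => ?_, fun _ => (hgS _).2 (Or.inl h3)⟩
      exact ((hgS _).1 h2).resolve_right fun h => hN i (Or.inr ⟨h1, h, h3⟩)) with hπ
  have coι : ∀ x v, co k n ε g x (ι.app x v) = co k n ε f x v := by
    intro x v
    rw [hι, co_can]
    split_ifs with h
    · rfl
    · rw [co_zero hf]
      exact fun h' => h ((hgS x).2 (Or.inr h'))
  have coπ : ∀ x v, co k n ε e x (π.app x v) = if Sp e x then co k n ε g x v else 0 := by
    intro x v
    rw [hπ, co_can]
  let σ : SES (Iv k n ε f) (Iv k n ε e) :=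
    { E := Iv k n ε g
      ι := ι
      π := π
      inj := by
        intro x u v huv
        apply co_inj
        rw [← coι, ← coι, huv]
      surj := by
        intro x v
        refine ⟨el k n ε g x (co k n ε e x v), ?_⟩
        apply co_inj
        rw [coπ, co_el hg]
        split_ifs with h1 h2
        · rfl
        · exact absurd ((hgS x).2 (Or.inl h1)) h2
        · rw [co_zero he h1]
      exct := by
        intro x v
        constructor
        · intro h
          refine ⟨el k n ε f x (co k n ε g x v), ?_⟩
          apply co_inj
          rw [coι, co_el hf]
          split_ifs with h1
          · rfl
          · have h2 := congrArg (co k n ε e x) h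
            rw [coπ, map_zero] at h2
            by_cases h3 : Sp e x
            · rw [if_pos h3] at h2; exact h2.symm
            · rw [co_zero hg]
              rw [hgS]; tauto
        · rintro ⟨u, rfl⟩
          apply co_inj
          rw [coπ, coι, map_zero]
          split_ifs with h
          · exact co_zero hf (hd x h) u
          · rfl }
  refine ⟨σ, ?_, iv_indec hg, ?_⟩
  · rintro ⟨r, hr⟩
    have h1 := key_zero hf hg hfg ι r
    rw [sc_of_id hf _ (by intro x v; exact hr x v)] at h1
    exact one_ne_zero h1
  · intro τ hτ
    obtain ⟨D⟩ := exists_liftData he hf τ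
    have hoj : D.o j ≠ 0 := by
      intro h0
      apply hτ
      refine D.splits he hf (fun _ => 0) (fun _ _ => rfl) ?_ ?_
      · intro i h1 h2 h3
        rw [hR i (Or.inl ⟨h1, h2, h3⟩), h0, add_zero]
      · intro i h1 h2 h3
        rw [hR i (Or.inr ⟨h1, h2, h3⟩), h0, add_zero]
    have hvn : ∀ x, ¬ Sp g x → io τ x + (D.o j)⁻¹ • D.w x = 0 := by
      intro x hx
      rw [hgS, not_or] at hx
      rw [io_not hf τ hx.2, D.w_not x hx.1, smul_zero, add_zero]
    let φ : (Iv k n ε g).Hom τ.E := homFrom hg (fun x => io τ x + (D.o j)⁻¹ • D.w x)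
      (by
        intro i h1 h2
        have e1 : (if Sp g (i+1) then io τ (i+1) + (D.o j)⁻¹ • D.w (i+1) else 0)
            = io τ (i+1) + (D.o j)⁻¹ • D.w (i+1) := by
          split_ifs with h
          · rfl
          · exact (hvn _ h).symm
        rw [e1, map_add, map_smul]
        rcases (hgS i).1 h2 with h3 | h3
        · rw [io_not hf τ (hd i h3), map_zero, zero_add, D.w_fwd i h1 h3, smul_add, smul_smul,
            add_comm (_ • D.w _)]
          congr 1
          by_cases h5 : Sp f (i+1)
          · rw [hR i (Or.inl ⟨h1, h3, h5⟩), inv_mul_cancel₀ hoj, one_smul]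
          · rw [io_not hf τ h5, smul_zero]
        · rw [D.w_not i (fun h => hd i h h3), map_zero, io_fwd hf τ i h1 h3,
            D.w_not (i+1) (fun h => hN i (Or.inl ⟨h1, h3, h⟩))])
      (by
        intro i h1 h2
        have e1 : (if Sp g i then io τ i + (D.o j)⁻¹ • D.w i else 0)
            = io τ i + (D.o j)⁻¹ • D.w i := by
          split_ifs with h
          · rfl
          · exact (hvn _ h).symm
        rw [e1, map_add, map_smul]
        rcases (hgS (i+1)).1 h2 with h3 | h3
        · rw [io_not hf τ (hd _ h3), map_zero, zero_add, D.w_bwd i h1 h3, smul_add, smul_smul,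
            add_comm (_ • D.w _)]
          congr 1
          by_cases h5 : Sp f i
          · rw [hR i (Or.inr ⟨h1, h3, h5⟩), inv_mul_cancel₀ hoj, one_smul]
          · rw [io_not hf τ h5, smul_zero]
        · rw [D.w_not (i+1) (fun h => hd _ h h3), map_zero, io_bwd hf τ i h1 h3,
            D.w_not i (fun h => hN i (Or.inr ⟨h1, h3, h⟩))])
    have hφ : ∀ x v, φ.app x v = co k n ε g x v • (io τ x + (D.o j)⁻¹ • D.w x) := fun _ _ => rfl
    have p1 : ∀ x (v : (Iv k n ε f).V x), φ.app x (σ.ι.app x v) = τ.ι.app x v := by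
      intro x v
      change φ.app x (ι.app x v) = _
      rw [hφ, coι]
      by_cases h : Sp f x
      · rw [D.w_not x (fun h' => hd x h' h), smul_zero, add_zero]
        unfold io
        rw [← map_smul, ← el_eq_smul, el_co hf]
      · have : v = 0 := by apply co_inj; rw [co_zero hf h, map_zero]
        rw [this, map_zero, map_zero, zero_smul]
    have p2 : ∀ x (v : σ.E.V x), τ.π.app x (φ.app x v) = (D.o j)⁻¹ • σ.π.app x v := by
      intro x v
      change τ.π.app x (φ.app x v) = (D.o j)⁻¹ • π.app x v
      rw [hφ, map_smul, map_add, map_smul, pi_io, zero_add, D.pi_w]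
      apply co_inj
      rw [map_smul, map_smul, map_smul, coπ, co_el he]
      split_ifs
      · simp only [smul_eq_mul]; ring
      · simp
    exact ⟨(D.o j)⁻¹, inv_ne_zero hoj, φ, SES.five σ τ _ (inv_ne_zero hoj) φ p1 p2, p1, p2⟩

/-- The combinatorial condition for a bad extension. -/
def Bad (ε : ℕ → Bool) (e f : ℕ × ℕ) : Prop :=
  max e.1 f.1 < min e.2 f.2 ∧
    ((e.1 < f.1 ∧ ε f.1 = true) ∨ (f.1 < e.1 ∧ ε e.1 = false)) ∧
    ((f.2 < e.2 ∧ ε f.2 = false) ∨ (e.2 < f.2 ∧ ε e.2 = true))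

theorem goodPair_of_not_bad (he : ValidPair n e) (hf : ValidPair n f) (h : ¬ Bad ε e f) :
    GoodPair (Iv k n ε e) (Iv k n ε f) := by
  by_cases hlr : max e.1 f.1 < min e.2 f.2
  · left
    intro τ
    obtain ⟨D⟩ := exists_liftData he hf τ
    refine D.splits' he hf ?_ hlr
    by_contra hcon
    push Not at hcon
    apply h
    obtain ⟨c1, c2⟩ := hcon
    refine ⟨hlr, ?_, ?_⟩
    · rcases c1 with ⟨c, h1, h2⟩ | ⟨c, h1, h2⟩
      · left
        have : max e.1 f.1 = f.1 := by unfold Sp at h1 h2; omega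
        rw [this] at c
        exact ⟨by unfold Sp at h1 h2; omega, c⟩
      · right
        have : max e.1 f.1 = e.1 := by unfold Sp at h1 h2; omega
        rw [this] at c
        exact ⟨by unfold Sp at h1 h2; omega, c⟩
    · rcases c2 with ⟨c, h1, h2⟩ | ⟨c, h1, h2⟩
      · right
        have : min e.2 f.2 = e.2 := by unfold Sp at h1 h2; omega
        rw [this] at c
        exact ⟨by unfold Sp at h1 h2; omega, c⟩
      · left
        have : min e.2 f.2 = f.2 := by unfold Sp at h1 h2; omega
        rw [this] at c
        exact ⟨by unfold Sp at h1 h2; omega, c⟩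
  · by_cases hR : ∃ j, Rl ε e f j
    · right
      obtain ⟨j, hj⟩ := hR
      obtain ⟨a, b⟩ := e
      obtain ⟨c, d⟩ := f
      unfold ValidPair at he hf
      rcases hj with ⟨j1, j2, j3⟩ | ⟨j1, j2, j3⟩
      · have q1 : j = b := by unfold Sp at j2 j3; simp only at *; omega
        have q2 : c = b := by unfold Sp at j2 j3; simp only at *; omega
        subst q1
        subst q2
        refine extOne he hf (g := (a, d)) ⟨?_, ?_⟩ c ?_ ?_ ?_ ?_ ?_
        all_goals first | intro i h1 h2 | intro i h1 | intro i | skip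
        all_goals unfold Sp at *
        all_goals try unfold Rl Sp at *
        all_goals simp only [Prod.mk.injEq] at *
        all_goals try omega
        rcases h1 with ⟨h1, h2, h3⟩ | ⟨h1, h2, h3⟩
        · omega
        · have : i = c := by omega
          subst this
          simp [j1] at h1
      · have q1 : j = a := by unfold Sp at j2 j3; simp only at *; omega
        have q2 : d = a := by unfold Sp at j2 j3; simp only at *; omega
        subst q1
        subst q2
        refine extOne he hf (g := (c, b)) ⟨?_, ?_⟩ d ?_ ?_ ?_ ?_ ?_
        all_goals first | intro i h1 h2 | intro i h1 | intro i | skip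
        all_goals unfold Sp at *
        all_goals try unfold Rl Sp at *
        all_goals simp only [Prod.mk.injEq] at *
        all_goals try omega
        rcases h1 with ⟨h1, h2, h3⟩ | ⟨h1, h2, h3⟩
        · have : i = d := by omega
          subst this
          simp [j1] at h1
        · omega
    · left
      intro τ
      obtain ⟨D⟩ := exists_liftData he hf τ
      refine D.splits he hf (fun _ => 0) (fun _ _ => rfl) ?_ ?_
      · intro i h1 h2 h3
        exact absurd ⟨i, Or.inl ⟨h1, h2, h3⟩⟩ hR
      · intro i h1 h2 h3
        exact absurd ⟨i, Or.inr ⟨h1, h2, h3⟩⟩ hR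

theorem dsum_ext {g g' : ℕ × ℕ} {x : ℕ} {u v : ((Iv k n ε g).dsum (Iv k n ε g')).V x}
    (h1 : co k n ε g x u.1 = co k n ε g x v.1) (h2 : co k n ε g' x u.2 = co k n ε g' x v.2) :
    u = v :=
  Prod.ext (co_inj h1) (co_inj h2)

theorem aux_exact {P Q R S : Prop} {x y : k} (z : P ∨ Q ↔ R ∨ S) (z' : P ∧ Q ↔ R ∧ S)
    (y1 : ¬ R → x = 0) (y2 : ¬ S → y = 0) (h : (if P then x - y else 0) = 0) :
    (if R then (if Q then (if R then x else y) else 0) else 0) = x ∧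
      (if S then (if Q then (if R then x else y) else 0) else 0) = y := by
  by_cases q1 : P <;> by_cases q2 : Q <;> by_cases q3 : R <;> by_cases q4 : S <;>
    simp_all [sub_eq_zero]

theorem aux_exact' {P Q R S : Prop} {u : k} (z : P ∨ Q ↔ R ∨ S) (z' : P ∧ Q ↔ R ∧ S)
    (y : ¬ Q → u = 0) :
    (if P then (if R then u else 0) - (if S then u else 0) else 0) = 0 := by
  by_cases q1 : P <;> by_cases q2 : Q <;> by_cases q3 : R <;> by_cases q4 : S <;>
    simp_all

theorem not_good_of_bad (he : ValidPair n e) (hf : ValidPair n f) (h : Bad ε e f) :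
    ¬ GoodPair (Iv k n ε e) (Iv k n ε f) := by
  obtain ⟨a, b⟩ := e
  obtain ⟨c, d⟩ := f
  obtain ⟨hlr, hl, hr⟩ := h
  simp only at hlr hl hr
  have hv1 : ValidPair n (a, d) := by unfold ValidPair at *; simp only at *; omega
  have hv2 : ValidPair n (c, b) := by unfold ValidPair at *; simp only at *; omega
  have hne1 : (c, d) ≠ (a, d) := by rw [Ne, Prod.mk.injEq]; omega
  have hne2 : (c, d) ≠ (c, b) := by rw [Ne, Prod.mk.injEq]; omega
  have no1 : ∀ i, ε i = true → ¬ (i = a ∧ c < a) := by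
    rintro i hi ⟨rfl, h⟩
    rcases hl with hl | hl
    · omega
    · rw [hl.2] at hi; exact absurd hi (by simp)
  have no2 : ∀ i, ε i = false → ¬ (i = c ∧ a < c) := by
    rintro i hi ⟨rfl, h⟩
    rcases hl with hl | hl
    · rw [hl.2] at hi; exact absurd hi (by simp)
    · omega
  have no3 : ∀ i, ε i = true → ¬ (i = d ∧ d < b) := by
    rintro i hi ⟨rfl, h⟩
    rcases hr with hr | hr
    · rw [hr.2] at hi; exact absurd hi (by simp)
    · omega
  have no4 : ∀ i, ε i = false → ¬ (i = b ∧ b < d) := by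
    rintro i hi ⟨rfl, h⟩
    rcases hr with hr | hr
    · omega
    · rw [hr.2] at hi; exact absurd hi (by simp)
  have hac : a ≠ c := by omega
  have hbd : b ≠ d := by omega
  set i1 : (Iv k n ε (c, d)).Hom (Iv k n ε (a, d)) := can k hf hv1
    (by intro i h1 h2 h3; have := no1 i h1; unfold Sp at *; simp only at *; omega)
    (by intro i h1 h2 h3; have := no2 i h1; unfold Sp at *; simp only at *; omega) with hi1
  set i2 : (Iv k n ε (c, d)).Hom (Iv k n ε (c, b)) := can k hf hv2
    (by intro i h1 h2 h3; have := no3 i h1; unfold Sp at *; simp only at *; omega)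
    (by intro i h1 h2 h3; have := no4 i h1; unfold Sp at *; simp only at *; omega) with hi2
  set p1 : (Iv k n ε (a, d)).Hom (Iv k n ε (a, b)) := can k hv1 he
    (by intro i h1 h2 h3; have := no3 i h1; unfold Sp at *; simp only at *; omega)
    (by intro i h1 h2 h3; have := no4 i h1; unfold Sp at *; simp only at *; omega) with hp1
  set p2 : (Iv k n ε (c, b)).Hom (Iv k n ε (a, b)) := can k hv2 he
    (by intro i h1 h2 h3; have := no1 i h1; unfold Sp at *; simp only at *; omega)
    (by intro i h1 h2 h3; have := no2 i h1; unfold Sp at *; simp only at *; omega) with hp2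
  set E := (Iv k n ε (a, d)).dsum (Iv k n ε (c, b)) with hE
  let ι : (Iv k n ε (c, d)).Hom E := pairH i1 i2
  let π : E.Hom (Iv k n ε (a, b)) := (p1.comp (fstH _ _)).add ((p2.comp (sndH _ _)).smul (-1))
  have cπ : ∀ x (v : E.V x), co k n ε (a, b) x (π.app x v) =
      if Sp (a, b) x then co k n ε (a, d) x v.1 - co k n ε (c, b) x v.2 else 0 := by
    intro x v
    have : π.app x v = p1.app x v.1 + (-1 : k) • p2.app x v.2 := rfl
    rw [this, map_add, map_smul, hp1, hp2, co_can, co_can]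
    split_ifs
    · simp only [smul_eq_mul]; ring
    · simp
  have cι1 : ∀ x v, co k n ε (a, d) x (ι.app x v).1 =
      if Sp (a, d) x then co k n ε (c, d) x v else 0 := fun x v => co_can hf hv1 _ _ x v
  have cι2 : ∀ x v, co k n ε (c, b) x (ι.app x v).2 =
      if Sp (c, b) x then co k n ε (c, d) x v else 0 := fun x v => co_can hf hv2 _ _ x v
  have z : ∀ x, Sp (a, b) x ∨ Sp (c, d) x ↔ Sp (a, d) x ∨ Sp (c, b) x := by
    intro x; unfold Sp; simp only; omega
  have z' : ∀ x, Sp (a, b) x ∧ Sp (c, d) x ↔ Sp (a, d) x ∧ Sp (c, b) x := by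
    intro x; unfold Sp; simp only; omega
  let σ : SES (Iv k n ε (c, d)) (Iv k n ε (a, b)) :=
    { E := E
      ι := ι
      π := π
      inj := by
        intro x u v huv
        apply co_inj
        have g1 := congrArg (fun t => co k n ε (a, d) x (Prod.fst t)) huv
        have g2 := congrArg (fun t => co k n ε (c, b) x (Prod.snd t)) huv
        simp only [cι1, cι2] at g1 g2
        by_cases hx : Sp (c, d) x
        · rcases (z x).1 (Or.inr hx) with h | h
          · simpa [h] using g1
          · simpa [h] using g2
        · rw [co_zero hf hx, co_zero hf hx]
      surj := by
        intro x v
        by_cases hx : Sp (a, b) x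
        · rcases (z x).1 (Or.inl hx) with h | h
          · refine ⟨(el k n ε (a, d) x (co k n ε (a, b) x v), 0), co_inj ((cπ x _).trans ?_)⟩
            change (if Sp (a, b) x then co k n ε (a, d) x (el k n ε (a, d) x
              (co k n ε (a, b) x v)) - co k n ε (c, b) x 0 else 0) = _
            rw [if_pos hx, co_el hv1, if_pos h, map_zero, sub_zero]
          · refine ⟨(0, -el k n ε (c, b) x (co k n ε (a, b) x v)), co_inj ((cπ x _).trans ?_)⟩
            change (if Sp (a, b) x then co k n ε (a, d) x 0 - co k n ε (c, b) x
              (-el k n ε (c, b) x (co k n ε (a, b) x v)) else 0) = _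
            rw [if_pos hx, map_neg, co_el hv2, if_pos h, map_zero, sub_neg_eq_add, zero_add]
        · refine ⟨0, co_inj ?_⟩
          rw [map_zero, map_zero, co_zero he hx]
      exct := by
        intro x v
        constructor
        · intro h
          have h2 := congrArg (co k n ε (a, b) x) h
          rw [cπ, map_zero] at h2
          have y1 : ¬ Sp (a, d) x → co k n ε (a, d) x v.1 = 0 := fun h => co_zero hv1 h _
          have y2 : ¬ Sp (c, b) x → co k n ε (c, b) x v.2 = 0 := fun h => co_zero hv2 h _
          obtain ⟨w1, w2⟩ := aux_exact (z x) (z' x) y1 y2 h2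
          refine ⟨el k n ε (c, d) x
            (if Sp (a, d) x then co k n ε (a, d) x v.1 else co k n ε (c, b) x v.2), ?_⟩
          apply dsum_ext
          · rw [cι1, co_el hf]
            exact w1
          · rw [cι2, co_el hf]
            exact w2
        · rintro ⟨u, rfl⟩
          apply co_inj
          rw [cπ, cι1, cι2, map_zero]
          exact aux_exact' (z x) (z' x) (fun h => co_zero hf h _) }
  refine not_goodPair σ ?_ ?_
  · rintro ⟨r, hr⟩
    have h1 := sc_cons (e := (c, d)) (Iv k n ε (a, d)) (Iv k n ε (c, b)) ι r
    rw [key_zero hf hv1 hne1, key_zero hf hv2 hne2,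
      sc_of_id hf _ (by intro x v; exact hr x v), add_zero] at h1
    exact one_ne_zero h1
  · intro hI
    rcases hI.2 _ _ (ARep.Iso.refl _) with h | h
    · exact iv_not_zero hv1 h
    · exact iv_not_zero hv2 h

theorem goodPair_iff (he : ValidPair n e) (hf : ValidPair n f) :
    GoodPair (Iv k n ε e) (Iv k n ε f) ↔ ¬ Bad ε e f :=
  ⟨fun h hb => not_good_of_bad he hf hb h, goodPair_of_not_bad he hf⟩

end ExtCalc

end CambrianA

namespace CambrianA

section Geometry

variable {n : ℕ} {ε : ℕ → Bool} {p : ℕ → ℂ} {e f : ℕ × ℕ}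

/-- Height of the line through the segment `e` at abscissa `x`. -/
def Ht (p : ℕ → ℂ) (e : ℕ × ℕ) (x : ℝ) : ℝ := (p e.1).im + slope p e * (x - (p e.1).re)

theorem Ht_left (p : ℕ → ℂ) (e : ℕ × ℕ) : Ht p e (p e.1).re = (p e.1).im := by
  unfold Ht; ring

theorem re_lt (hp : PolyPts n ε p) {a b : ℕ} (h : a < b) (hb : b ≤ n + 2) :
    (p a).re < (p b).re := hp.1 a b h hb

theorem re_le (hp : PolyPts n ε p) {a b : ℕ} (h : a ≤ b) (hb : b ≤ n + 2) :
    (p a).re ≤ (p b).re := by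
  rcases h.lt_or_eq with h | rfl
  · exact (re_lt hp h hb).le
  · exact le_rfl

theorem Ht_right (hp : PolyPts n ε p) (he : ValidPair n e) :
    Ht p e (p e.2).re = (p e.2).im := by
  have := re_lt hp he.1 he.2
  unfold Ht slope
  rw [div_mul_cancel₀ _ (by linarith)]
  ring

theorem mem_seg_iff (hp : PolyPts n ε p) (he : ValidPair n e) (z : ℂ) :
    z ∈ Seg p e ↔ (p e.1).re ≤ z.re ∧ z.re ≤ (p e.2).re ∧ z.im = Ht p e z.re := by
  have h1 := re_lt hp he.1 he.2
  have h3 := Ht_right hp he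
  unfold Ht at *
  set X := (p e.1).re
  set X' := (p e.2).re
  set m := slope p e
  unfold Seg
  rw [segment_eq_image]
  constructor
  · rintro ⟨t, ⟨ht0, ht1⟩, rfl⟩
    simp only [Complex.add_re, Complex.add_im, Complex.real_smul, Complex.re_ofReal_mul,
      Complex.im_ofReal_mul]
    refine ⟨by nlinarith, by nlinarith, ?_⟩
    rw [← h3]
    ring
  · rintro ⟨hz1, hz2, hz3⟩
    refine ⟨(z.re - X) / (X' - X), ⟨div_nonneg (by linarith) (by linarith),
      (div_le_one (by linarith)).2 (by linarith)⟩, ?_⟩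
    have hne : X' - X ≠ 0 := by linarith
    have ht : (z.re - X) / (X' - X) * (X' - X) = z.re - X := div_mul_cancel₀ _ hne
    set t := (z.re - X) / (X' - X)
    apply Complex.ext
    · simp only [Complex.add_re, Complex.real_smul, Complex.re_ofReal_mul]
      linear_combination ht
    · simp only [Complex.add_im, Complex.real_smul, Complex.im_ofReal_mul]
      rw [hz3, ← h3]
      linear_combination m * ht

theorem vertical {S : Set ℂ} (hS : Convex ℝ S) {u q z : ℂ} (hu : u ∈ S) (hq : q ∈ S)
    (h1 : u.re = z.re) (h2 : q.re = z.re) (h3 : u.im < z.im) (h4 : z.im ≤ q.im) : z ∈ S := by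
  have hlt : u.im < q.im := by linarith
  apply hS.segment_subset hu hq
  rw [segment_eq_image]
  refine ⟨(z.im - u.im) / (q.im - u.im), ⟨div_nonneg (by linarith) (by linarith),
    (div_le_one (by linarith)).2 (by linarith)⟩, ?_⟩
  have ht : (z.im - u.im) / (q.im - u.im) * (q.im - u.im) = z.im - u.im :=
    div_mul_cancel₀ _ (by linarith)
  set t := (z.im - u.im) / (q.im - u.im)
  apply Complex.ext
  · simp only [Complex.add_re, Complex.real_smul, Complex.re_ofReal_mul]
    rw [h1, h2]; ring
  · simp only [Complex.add_im, Complex.real_smul, Complex.im_ofReal_mul]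
    linear_combination ht

theorem vertical' {S : Set ℂ} (hS : Convex ℝ S) {u q z : ℂ} (hu : u ∈ S) (hq : q ∈ S)
    (h1 : u.re = z.re) (h2 : q.re = z.re) (h3 : z.im < u.im) (h4 : q.im ≤ z.im) : z ∈ S := by
  rcases h4.lt_or_eq with h4 | h4
  · exact vertical hS hq hu h2 h1 h4 h3.le
  · have : z = q := Complex.ext h2.symm h4.symm
    rw [this]; exact hq

theorem orient (hp : PolyPts n ε p) (he : ValidPair n e) {c : ℕ} (h1 : e.1 < c) (h2 : c < e.2) :
    (ε c = true → Ht p e (p c).re < (p c).im) ∧ (ε c = false → (p c).im < Ht p e (p c).re) := by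
  have hb := he.2
  set S := convexHull ℝ (p '' {j | j ≤ n + 2 ∧ j ≠ c}) with hSdef
  have hS : Convex ℝ S := convex_convexHull ℝ _
  have hmem : ∀ j, j ≤ n + 2 → j ≠ c → p j ∈ S := fun j hj hj' =>
    subset_convexHull ℝ _ ⟨j, ⟨hj, hj'⟩, rfl⟩
  have hnot : p c ∉ S := hp.2.2.2 c (by omega)
  have hsub : ∀ g, ValidPair n g → g.1 ≠ c → g.2 ≠ c → g.1 ≤ c → c ≤ g.2 →
      (⟨(p c).re, Ht p g (p c).re⟩ : ℂ) ∈ S := by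
    intro g hg g1 g2 g3 g4
    have := hg.1
    have := hg.2
    apply hS.segment_subset (hmem g.1 (by omega) g1) (hmem g.2 (by omega) g2)
    refine (mem_seg_iff hp hg _).2 ⟨re_le hp g3 (by omega), re_le hp g4 (by omega), rfl⟩
  have hq := hsub e he (by omega) (by omega) (by omega) (by omega)
  have hu := hsub (0, n+2) ⟨by simp, by simp⟩ (by simp only; omega) (by simp only; omega)
    (by simp) (by simp only; omega)
  have hu0 : Ht p (0, n+2) (p c).re = (p 0).im := by
    unfold Ht slope
    rw [hp.2.1]
    simp
  rw [hu0] at hu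
  have hc := hp.2.2.1 c (by omega) (by omega)
  constructor
  · intro h
    by_contra hcon
    push Not at hcon
    exact hnot (vertical hS hu hq rfl rfl (hc.1 h) hcon)
  · intro h
    by_contra hcon
    push Not at hcon
    exact hnot (vertical' hS hu hq rfl rfl (hc.2 h) hcon)

theorem Ht_affine (p : ℕ → ℂ) (e f : ℕ × ℕ) (u v x : ℝ) :
    (v - u) * (Ht p f x - Ht p e x) =
      (v - x) * (Ht p f u - Ht p e u) + (x - u) * (Ht p f v - Ht p e v) := by
  unfold Ht; ring

theorem left_sign (hp : PolyPts n ε p) (he : ValidPair n e) (hf : ValidPair n f)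
    (hlr : max e.1 f.1 < min e.2 f.2) :
    (((e.1 < f.1 ∧ ε f.1 = true) ∨ (f.1 < e.1 ∧ ε e.1 = false)) ∧
      0 < Ht p f (p (max e.1 f.1)).re - Ht p e (p (max e.1 f.1)).re) ∨
    (((f.1 < e.1 ∧ ε e.1 = true) ∨ (e.1 < f.1 ∧ ε f.1 = false)) ∧
      Ht p f (p (max e.1 f.1)).re - Ht p e (p (max e.1 f.1)).re < 0) ∨ e.1 = f.1 := by
  rcases lt_trichotomy e.1 f.1 with h | h | h
  · rw [max_eq_right h.le, Ht_left]
    have := orient hp he h (by omega)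
    cases hh : ε f.1
    · right; left
      exact ⟨Or.inr ⟨h, rfl⟩, by linarith [this.2 hh]⟩
    · left
      exact ⟨Or.inl ⟨h, rfl⟩, by linarith [this.1 hh]⟩
  · exact Or.inr (Or.inr h)
  · rw [max_eq_left h.le, Ht_left]
    have := orient hp hf h (by omega)
    cases hh : ε e.1
    · left
      exact ⟨Or.inr ⟨h, rfl⟩, by linarith [this.2 hh]⟩
    · right; left
      exact ⟨Or.inl ⟨h, rfl⟩, by linarith [this.1 hh]⟩

theorem right_sign (hp : PolyPts n ε p) (he : ValidPair n e) (hf : ValidPair n f)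
    (hlr : max e.1 f.1 < min e.2 f.2) :
    (((f.2 < e.2 ∧ ε f.2 = false) ∨ (e.2 < f.2 ∧ ε e.2 = true)) ∧
      Ht p f (p (min e.2 f.2)).re - Ht p e (p (min e.2 f.2)).re < 0) ∨
    (((e.2 < f.2 ∧ ε e.2 = false) ∨ (f.2 < e.2 ∧ ε f.2 = true)) ∧
      0 < Ht p f (p (min e.2 f.2)).re - Ht p e (p (min e.2 f.2)).re) ∨ e.2 = f.2 := by
  rcases lt_trichotomy e.2 f.2 with h | h | h
  · rw [min_eq_left h.le, Ht_right hp he]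
    have := orient hp hf (c := e.2) (by omega) h
    cases hh : ε e.2
    · right; left
      exact ⟨Or.inl ⟨h, rfl⟩, by linarith [this.2 hh]⟩
    · left
      exact ⟨Or.inr ⟨h, rfl⟩, by linarith [this.1 hh]⟩
  · exact Or.inr (Or.inr h)
  · rw [min_eq_right h.le, Ht_right hp hf]
    have := orient hp he (c := f.2) (by omega) h
    cases hh : ε f.2
    · left
      exact ⟨Or.inl ⟨h, rfl⟩, by linarith [this.2 hh]⟩
    · right; left
      exact ⟨Or.inr ⟨h, rfl⟩, by linarith [this.1 hh]⟩

theorem Bad_lt (h : Bad ε e f) : max e.1 f.1 < min e.2 f.2 := h.1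

/-- Opposite signs give a crossing. -/
theorem cross_of_signs (hp : PolyPts n ε p) (he : ValidPair n e) (hf : ValidPair n f)
    (hlr : max e.1 f.1 < min e.2 f.2)
    (h : (Ht p f (p (max e.1 f.1)).re - Ht p e (p (max e.1 f.1)).re) *
      (Ht p f (p (min e.2 f.2)).re - Ht p e (p (min e.2 f.2)).re) < 0) : Cross p e f := by
  have he2 := he.2
  have hf2 := hf.2
  have a1 := re_le hp (le_max_left e.1 f.1) (by omega)
  have a2 := re_le hp (le_max_right e.1 f.1) (by omega)
  have a3 := re_le hp (min_le_left e.2 f.2) (by omega)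
  have a4 := re_le hp (min_le_right e.2 f.2) (by omega)
  have a5 := re_lt hp hlr (by omega)
  set u := (p (max e.1 f.1)).re
  set v := (p (min e.2 f.2)).re
  have haff := Ht_affine p e f u v
  set A := Ht p f u - Ht p e u with hA
  set B := Ht p f v - Ht p e v with hB
  obtain ⟨x, hx1, hx2, hx3⟩ : ∃ x, u < x ∧ x < v ∧ Ht p f x - Ht p e x = 0 := by
    have hAB : A - B ≠ 0 := by
      intro h0
      have : A = B := by linarith
      rw [this] at h
      nlinarith [mul_self_nonneg B]
    refine ⟨u + A / (A - B) * (v - u), ?_, ?_, ?_⟩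
    · have : 0 < A / (A - B) := by
        rw [div_eq_mul_inv]
        rcases lt_or_gt_of_ne hAB with h' | h'
        · have : A < 0 := by nlinarith
          exact mul_pos_of_neg_of_neg this (inv_lt_zero.2 h')
        · have : 0 < A := by nlinarith
          exact mul_pos this (inv_pos.2 h')
      nlinarith
    · have : A / (A - B) < 1 := by
        rcases lt_or_gt_of_ne hAB with h' | h'
        · rw [div_lt_one_of_neg h']
          nlinarith
        · rw [div_lt_one h']
          nlinarith
      nlinarith
    · have h1 := haff (u + A / (A - B) * (v - u))
      have ht : A / (A - B) * (A - B) = A := div_mul_cancel₀ _ hAB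
      set t := A / (A - B)
      have h2 : (v - u) * (Ht p f (u + t * (v - u)) - Ht p e (u + t * (v - u))) = 0 := by
        rw [h1]
        linear_combination (-(v - u)) * ht
      rcases mul_eq_zero.1 h2 with h3 | h3
      · linarith
      · exact h3
  refine ⟨⟨x, Ht p e x⟩, ?_, ?_, ?_⟩
  · exact (mem_seg_iff hp he _).2 ⟨by simp only; linarith, by simp only; linarith, rfl⟩
  · exact (mem_seg_iff hp hf _).2 ⟨by simp only; linarith, by simp only; linarith, by
      simp only; linarith⟩
  · rintro ⟨h1 | h1, _⟩
    · have := congrArg Complex.re h1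
      simp only at this
      linarith
    · have := congrArg Complex.re h1
      simp only at this
      linarith

theorem cross_iff (hp : PolyPts n ε p) (he : ValidPair n e) (hf : ValidPair n f) (hne : e ≠ f) :
    Cross p e f ↔ Bad ε e f ∨ Bad ε f e := by
  have he1 := he.1
  have hf1 := hf.1
  have he2 := he.2
  have hf2 := hf.2
  by_cases hlr : max e.1 f.1 < min e.2 f.2
  · have hlr' : max f.1 e.1 < min f.2 e.2 := by omega
    have hL := left_sign hp he hf hlr
    have hR := right_sign hp he hf hlr
    have hX := cross_of_signs hp he hf hlr
    have a5 := re_lt hp hlr (by omega)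
    have haff := Ht_affine p e f (p (max e.1 f.1)).re (p (min e.2 f.2)).re
    -- a crossing point
    have hcr : Cross p e f → ∃ x, (p (max e.1 f.1)).re ≤ x ∧ x ≤ (p (min e.2 f.2)).re ∧
        Ht p f x - Ht p e x = 0 ∧ (e.1 = f.1 → (p (max e.1 f.1)).re < x) ∧
        (e.2 = f.2 → x < (p (min e.2 f.2)).re) := by
      rintro ⟨z, z1, z2, z3⟩
      have z1' := (mem_seg_iff hp he z).1 z1
      have z2' := (mem_seg_iff hp hf z).1 z2
      have b1 : (p (max e.1 f.1)).re ≤ z.re := by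
        rcases max_choice e.1 f.1 with h | h <;> rw [h]
        · exact z1'.1
        · exact z2'.1
      have b2 : z.re ≤ (p (min e.2 f.2)).re := by
        rcases min_choice e.2 f.2 with h | h <;> rw [h]
        · exact z1'.2.1
        · exact z2'.2.1
      refine ⟨z.re, b1, b2, by linarith [z1'.2.2, z2'.2.2], ?_, ?_⟩
      · intro h
        refine lt_of_le_of_ne b1 fun hz => z3 ?_
        rw [← h, max_self] at hz
        have : z = p e.1 := Complex.ext hz.symm (by rw [z1'.2.2, ← hz, Ht_left])
        exact ⟨Or.inl this, Or.inl (by rw [← h]; exact this)⟩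
      · intro h
        refine lt_of_le_of_ne b2 fun hz => z3 ?_
        rw [← h, min_self] at hz
        have : z = p e.2 := Complex.ext hz (by rw [z1'.2.2, hz, Ht_right hp he])
        exact ⟨Or.inr this, Or.inr (by rw [← h]; exact this)⟩
    have hL0 : e.1 = f.1 → Ht p f (p (max e.1 f.1)).re - Ht p e (p (max e.1 f.1)).re = 0 := by
      intro h
      rw [← h, max_self, Ht_left]
      have := Ht_left p f
      rw [← h] at this
      rw [this, sub_self]
    have hR0 : e.2 = f.2 → Ht p f (p (min e.2 f.2)).re - Ht p e (p (min e.2 f.2)).re = 0 := by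
      intro h
      rw [← h, min_self, Ht_right hp he]
      have := Ht_right hp hf
      rw [← h] at this
      rw [this, sub_self]
    have nb1 : ∀ h : ¬ (((e.1 < f.1 ∧ ε f.1 = true) ∨ (f.1 < e.1 ∧ ε e.1 = false)) ∧
        ((f.2 < e.2 ∧ ε f.2 = false) ∨ (e.2 < f.2 ∧ ε e.2 = true))), ¬ Bad ε e f :=
      fun h h' => h h'.2
    generalize (p (max e.1 f.1)).re = u at *
    generalize (p (min e.2 f.2)).re = v at *
    generalize Ht p f u - Ht p e u = A at *
    generalize Ht p f v - Ht p e v = B at *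
    constructor
    · intro hc
      obtain ⟨x, x1, x2, x3, x4, x5⟩ := hcr hc
      have hx := haff x
      rw [x3, mul_zero] at hx
      rcases hL with ⟨l1, l2⟩ | ⟨l1, l2⟩ | l1
      · rcases hR with ⟨r1, r2⟩ | ⟨r1, r2⟩ | r1
        · exact Or.inl ⟨hlr, l1, r1⟩
        · exfalso
          rcases x1.lt_or_eq with h | h
          · nlinarith
          · nlinarith
        · exfalso
          rw [hR0 r1] at hx
          nlinarith [x5 r1]
      · rcases hR with ⟨r1, r2⟩ | ⟨r1, r2⟩ | r1
        · exfalso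
          rcases x1.lt_or_eq with h | h
          · nlinarith
          · nlinarith
        · exact Or.inr ⟨hlr', l1, r1⟩
        · exfalso
          rw [hR0 r1] at hx
          nlinarith [x5 r1]
      · exfalso
        rw [hL0 l1] at hx
        rcases hR with ⟨r1, r2⟩ | ⟨r1, r2⟩ | r1
        · nlinarith [x4 l1]
        · nlinarith [x4 l1]
        · exact hne (Prod.ext l1 r1)
    · rintro (⟨_, h1, h2⟩ | ⟨_, h1, h2⟩)
      · have hA : 0 < A := by
          rcases hL with ⟨l1, l2⟩ | ⟨l1, l2⟩ | l1
          · exact l2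
          · exfalso; rcases h1 with h1 | h1 <;> rcases l1 with l1 | l1 <;> first | omega | simp_all
          · omega
        have hB : B < 0 := by
          rcases hR with ⟨l1, l2⟩ | ⟨l1, l2⟩ | l1
          · exact l2
          · exfalso; rcases h2 with h1 | h1 <;> rcases l1 with l1 | l1 <;> first | omega | simp_all
          · omega
        exact hX (mul_neg_of_pos_of_neg hA hB)
      · have hA : A < 0 := by
          rcases hL with ⟨l1, l2⟩ | ⟨l1, l2⟩ | l1
          · exfalso; rcases h1 with h1 | h1 <;> rcases l1 with l1 | l1 <;> first | omega | simp_all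
          · exact l2
          · omega
        have hB : 0 < B := by
          rcases hR with ⟨l1, l2⟩ | ⟨l1, l2⟩ | l1
          · exfalso; rcases h2 with h1 | h1 <;> rcases l1 with l1 | l1 <;> first | omega | simp_all
          · exact l2
          · omega
        exact hX (mul_neg_of_neg_of_pos hA hB)
  · constructor
    · rintro ⟨z, z1, z2, z3⟩
      exfalso
      have z1' := (mem_seg_iff hp he z).1 z1
      have z2' := (mem_seg_iff hp hf z).1 z2
      rcases (by omega : e.2 ≤ f.1 ∨ f.2 ≤ e.1) with h | h
      · rcases h.lt_or_eq with h | h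
        · have := re_lt hp h (by omega)
          linarith [z1'.2.1, z2'.1]
        · have hz : z.re = (p e.2).re := le_antisymm z1'.2.1 (by rw [h]; exact z2'.1)
          have : z = p e.2 := Complex.ext hz (by rw [z1'.2.2, hz, Ht_right hp he])
          exact z3 ⟨Or.inr this, Or.inl (by rw [← h]; exact this)⟩
      · rcases h.lt_or_eq with h | h
        · have := re_lt hp h (by omega)
          linarith [z2'.2.1, z1'.1]
        · have hz : z.re = (p e.1).re := le_antisymm (by rw [← h]; exact z2'.2.1) z1'.1
          have : z = p e.1 := Complex.ext hz (by rw [z1'.2.2, hz, Ht_left])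
          exact z3 ⟨Or.inl this, Or.inr (by rw [h]; exact this)⟩
    · rintro (h | h)
      · exact absurd h.1 hlr
      · have := h.1
        omega

end Geometry

end CambrianA

namespace CambrianA

section Final

variable {k : Type} [Field k] {n : ℕ} {ε : ℕ → Bool} {p : ℕ → ℂ}

theorem Bad_self (e : ℕ × ℕ) : ¬ Bad ε e e := by
  rintro ⟨_, h | h, _⟩ <;> exact lt_irrefl _ h.1

/-- Almost rigidity of a direct sum of interval representations is noncrossing. -/
theorem almostRigid_Sm_iff_cross (hp : PolyPts n ε p) {L : List (ℕ × ℕ)}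
    (hL : ∀ e ∈ L, ValidPair n e) :
    AlmostRigid (Sm k n ε L) ↔ L.Nodup ∧ ∀ e ∈ L, ∀ f ∈ L, e ≠ f → ¬ Cross p e f := by
  rw [almostRigid_Sm_iff hL]
  refine and_congr_right fun _ => ⟨fun h e he f hf hne hc => ?_, fun h e he f hf => ?_⟩
  · rcases (cross_iff hp (hL e he) (hL f hf) hne).1 hc with hb | hb
    · exact (goodPair_iff (hL e he) (hL f hf)).1 (h e he f hf) hb
    · exact (goodPair_iff (hL f hf) (hL e he)).1 (h f hf e he) hb
  · rw [goodPair_iff (hL e he) (hL f hf)]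
    intro hb
    by_cases hne : e = f
    · subst hne
      exact Bad_self e hb
    · exact h e he f hf hne ((cross_iff hp (hL e he) (hL f hf) hne).2 (Or.inl hb))

theorem Cross.symm {e f : ℕ × ℕ} (h : Cross p e f) : Cross p f e := by
  obtain ⟨z, h1, h2, h3⟩ := h
  exact ⟨z, h2, h1, fun h => h3 ⟨h.2, h.1⟩⟩

theorem part_one (hp : PolyPts n ε p) (T : Finset (ℕ × ℕ)) (hT : IsTriangulation n p T) :
    MaxAlmostRigid (FRep k n ε T) := by
  obtain ⟨h1, h2, h3⟩ := hT
  rw [FRep_eq]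
  have hv : ∀ e ∈ T.toList, ValidPair n e := fun e he => h1 e (Finset.mem_toList.1 he)
  refine ⟨(almostRigid_Sm_iff_cross hp hv).2 ⟨T.nodup_toList, fun e he f hf =>
    h2 e (Finset.mem_toList.1 he) f (Finset.mem_toList.1 hf)⟩, ?_⟩
  intro M hM hAR
  obtain ⟨L, hL, hML⟩ := decomp M
  have hAR' : AlmostRigid (Sm k n ε (T.toList ++ L)) :=
    AlmostRigid.of_iso ((dsum_congr (ARep.Iso.refl _) hML).trans (Sm_append _ _).symm) hAR
  have hv' : ∀ e ∈ T.toList ++ L, ValidPair n e := by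
    intro e he
    rcases List.mem_append.1 he with h | h
    · exact hv e h
    · exact hL e h
  obtain ⟨hnd, hnc⟩ := (almostRigid_Sm_iff_cross hp hv').1 hAR'
  cases L with
  | nil => exact hM (hML.symm.isZero Sm_nil)
  | cons e L =>
    have heT : e ∉ T := by
      intro he
      exact (List.nodup_append.1 hnd).2.2 e (Finset.mem_toList.2 he) e (by simp) rfl
    obtain ⟨f, hf, hc⟩ := h3 e (hL e (by simp)) heT
    exact hnc e (by simp) f (by simp [hf]) (by rintro rfl; exact heT hf) hc

theorem subset_of_iso (T T' : Finset (ℕ × ℕ)) (hT : IsTriangulation n p T)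
    (hT' : IsTriangulation n p T') (h : (FRep k n ε T).Iso (FRep k n ε T')) : T ⊆ T' := by
  intro e he
  rw [FRep_eq, FRep_eq] at h
  have h1 : (Iv k n ε e).IsSummand (Sm k n ε T.toList) :=
    isSummand_of_mem (Finset.mem_toList.2 he)
  exact Finset.mem_toList.1 (mem_of_isSummand (hT.1 e he)
    (fun f hf => hT'.1 f (Finset.mem_toList.1 hf)) (isSummand_trans h1 (isSummand_of_iso h)))

theorem part_three (hp : PolyPts n ε p) (X : ARep k n ε) (hX : MaxAlmostRigid X) :
    ∃ T : Finset (ℕ × ℕ), IsTriangulation n p T ∧ (FRep k n ε T).Iso X := by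
  obtain ⟨L, hL, hXL⟩ := decomp X
  obtain ⟨hnd, hnc⟩ := (almostRigid_Sm_iff_cross hp hL).1 (AlmostRigid.of_iso hXL hX.1)
  refine ⟨L.toFinset, ⟨fun e he => hL e (List.mem_toFinset.1 he), fun e he f hf =>
    hnc e (List.mem_toFinset.1 he) f (List.mem_toFinset.1 hf), ?_⟩, ?_⟩
  · intro e hv he
    rw [List.mem_toFinset] at he
    by_contra hcon
    push Not at hcon
    have hv' : ∀ f ∈ e :: L, ValidPair n f := by
      intro f hf
      rcases List.mem_cons.1 hf with rfl | hf
      · exact hv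
      · exact hL f hf
    have hAR : AlmostRigid (Sm k n ε (e :: L)) := by
      rw [almostRigid_Sm_iff_cross hp hv']
      refine ⟨List.nodup_cons.2 ⟨he, hnd⟩, ?_⟩
      intro g hg f hf hne
      rcases List.mem_cons.1 hg with rfl | hgL
      · rcases List.mem_cons.1 hf with rfl | hf
        · exact absurd rfl hne
        · exact hcon f (List.mem_toFinset.2 hf)
      · rcases List.mem_cons.1 hf with rfl | hf
        · exact fun hc => hcon g (List.mem_toFinset.2 hgL) hc.symm
        · exact hnc g hgL f hf hne
    refine hX.2 (Iv k n ε e) (iv_not_zero hv) (AlmostRigid.of_iso ?_ hAR)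
    exact (dsum_congr (ARep.Iso.refl _) hXL.symm).trans (dsum_comm _ _)
  · rw [FRep_eq]
    refine (Sm_perm ?_).trans hXL.symm
    have := List.toFinset_toList hnd
    exact this

end Final

end CambrianA

namespace CambrianA

/-- `F` is a bijection from the set of triangulations of `P(Q)` onto the
set of isomorphism classes of maximal almost rigid representations of `Q`. -/
theorem stmt_9 (k : Type) [Field k] (n : ℕ) (ε : ℕ → Bool) (p : ℕ → ℂ)
    (hp : PolyPts n ε p) :
    (∀ T : Finset (ℕ × ℕ), IsTriangulation n p T → MaxAlmostRigid (FRep k n ε T)) ∧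
    (∀ T T' : Finset (ℕ × ℕ), IsTriangulation n p T → IsTriangulation n p T' →
      ((FRep k n ε T).Iso (FRep k n ε T') ↔ T = T')) ∧
    (∀ X : ARep k n ε, MaxAlmostRigid X →
      ∃ T : Finset (ℕ × ℕ), IsTriangulation n p T ∧ (FRep k n ε T).Iso X) := by
  exact ⟨fun T hT => part_one hp T hT, fun T T' hT hT' =>
    ⟨fun h => Finset.Subset.antisymm (subset_of_iso T T' hT hT' h)
      (subset_of_iso T' T hT' hT h.symm), fun h => h ▸ ARep.Iso.refl _⟩,
    fun X hX => part_three hp X hX⟩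

end CambrianA
end
end
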